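/- arXiv:1708.07309 — 2 statements merged into one kernel-verified Lean document; each statement's English description precedes it below -/
import Mathlib

section
/- (Proposition 1, CEO region decomposition.) The rate-distortion region RD_CEO equals the convex hull of the union of the two regions RD¹_CEO and RD²_CEO, i.e., RD_CEO = conv(RD¹_CEO ∪ RD²_CEO) as subsets of ℝ³. -/
open Finset Real

noncomputable section

/-- Shannon entropy of a finitely supported nonnegative vector,
with the convention `0 · log 0 = 0` (natural logarithm). -/
def ent {α : Type} [Fintype α] (p : α → ℝ) : ℝ := ∑ a, Real.negMulLog (p a)

/-- `p` is a probability mass function on the finite alphabet `α`. -/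
def IsPmf {α : Type} [Fintype α] (p : α → ℝ) : Prop := (∀ a, 0 ≤ p a) ∧ ∑ a, p a = 1

/-- `w` is a conditional pmf (channel) from `α` to `β`. -/
def IsChan {α β : Type} [Fintype α] [Fintype β] (w : α → β → ℝ) : Prop := ∀ a, IsPmf (w a)

/-- Kullback–Leibler divergence between two vectors on a finite alphabet
(convention `0 · log (0/q) = 0` is automatic since `Real.log` of junk is multiplied by `0`). -/
def KL {α : Type} [Fintype α] (r q : α → ℝ) : ℝ := ∑ a, r a * Real.log (r a / q a)

variable {X Y1 Y2 U1 U2 : Type} [Fintype X] [Fintype Y1] [Fintype Y2] [Fintype U1] [Fintype U2]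

/-- The joint pmf `p(x,y₁,y₂,u₁,u₂) = p(x)p(y₁|x)p(y₂|x)p(u₁|y₁)p(u₂|y₂)`
induced by the CEO source `(pX, W1, W2)` and a test-channel pair `(p1, p2)`. -/
def ceoJoint (pX : X → ℝ) (W1 : X → Y1 → ℝ) (W2 : X → Y2 → ℝ)
    (p1 : Y1 → U1 → ℝ) (p2 : Y2 → U2 → ℝ) : X × Y1 × Y2 × U1 × U2 → ℝ :=
  fun z => pX z.1 * W1 z.1 z.2.1 * W2 z.1 z.2.2.1 * p1 z.2.1 z.2.2.2.1 * p2 z.2.2.1 z.2.2.2.2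

/-- Marginal `p(x,u₁,u₂)`. -/
def mXU (j : X × Y1 × Y2 × U1 × U2 → ℝ) : X × U1 × U2 → ℝ :=
  fun z => ∑ y1, ∑ y2, j (z.1, y1, y2, z.2.1, z.2.2)

/-- Marginal `p(u₁,u₂)`. -/
def mU12 (j : X × Y1 × Y2 × U1 × U2 → ℝ) : U1 × U2 → ℝ :=
  fun u => ∑ x, mXU j (x, u.1, u.2)

/-- Marginal `p(u₂)`. -/
def mU2 (j : X × Y1 × Y2 × U1 × U2 → ℝ) : U2 → ℝ := fun u2 => ∑ u1, mU12 j (u1, u2)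

/-- Marginal `p(y₁,u₁,u₂)`. -/
def mY1U (j : X × Y1 × Y2 × U1 × U2 → ℝ) : Y1 × U1 × U2 → ℝ :=
  fun z => ∑ x, ∑ y2, j (x, z.1, y2, z.2.1, z.2.2)

/-- Marginal `p(y₁,u₂)`. -/
def mY1U2 (j : X × Y1 × Y2 × U1 × U2 → ℝ) : Y1 × U2 → ℝ :=
  fun z => ∑ u1, mY1U j (z.1, u1, z.2)

/-- Marginal `p(y₂,u₂)`. -/
def mY2U2 (j : X × Y1 × Y2 × U1 × U2 → ℝ) : Y2 × U2 → ℝ :=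
  fun z => ∑ x, ∑ y1, ∑ u1, j (x, y1, z.1, u1, z.2)

/-- Marginal `p(y₂)`. -/
def mY2 (j : X × Y1 × Y2 × U1 × U2 → ℝ) : Y2 → ℝ := fun y2 => ∑ u2, mY2U2 j (y2, u2)

/-- Conditional entropy `H(X|U₁,U₂)` of the joint pmf `j`. -/
def condHX (j : X × Y1 × Y2 × U1 × U2 → ℝ) : ℝ := ent (mXU j) - ent (mU12 j)

/-- Conditional mutual information `I(Y₁;U₁|U₂)` of the joint pmf `j`. -/
def I1c (j : X × Y1 × Y2 × U1 × U2 → ℝ) : ℝ :=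
  ent (mY1U2 j) + ent (mU12 j) - ent (mU2 j) - ent (mY1U j)

/-- Mutual information `I(Y₂;U₂)` of the joint pmf `j`. -/
def I2m (j : X × Y1 × Y2 × U1 × U2 → ℝ) : ℝ := ent (mY2 j) + ent (mU2 j) - ent (mY2U2 j)

/-- The functional `F_s(P) = H(X|U₁,U₂) + s₁ I(Y₁;U₁|U₂) + s₂ I(Y₂;U₂)`. -/
def Fs (s1 s2 : ℝ) (j : X × Y1 × Y2 × U1 × U2 → ℝ) : ℝ :=
  condHX j + s1 * I1c j + s2 * I2m j

/-- `D¹_CEO(R₁,R₂)`: the minimal `H(X|U₁,U₂)` over test-channel pairs into the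
auxiliary alphabets `V1`, `V2`, subject to `I(Y₁;U₁|U₂) ≤ R₁` and `I(Y₂;U₂) ≤ R₂`. -/
def Dceo1 (V1 V2 : Type) [Fintype V1] [Fintype V2]
    (pX : X → ℝ) (W1 : X → Y1 → ℝ) (W2 : X → Y2 → ℝ) (R1 R2 : ℝ) : ℝ :=
  sInf {d : ℝ | ∃ p1 : Y1 → V1 → ℝ, ∃ p2 : Y2 → V2 → ℝ, IsChan p1 ∧ IsChan p2 ∧
    I1c (ceoJoint pX W1 W2 p1 p2) ≤ R1 ∧ I2m (ceoJoint pX W1 W2 p1 p2) ≤ R2 ∧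
    d = condHX (ceoJoint pX W1 W2 p1 p2)}

/-- Marginal `p(y₁)` of the source. -/
def pY1m (pX : X → ℝ) (W1 : X → Y1 → ℝ) : Y1 → ℝ := fun y1 => ∑ x, pX x * W1 x y1

/-- Marginal `p(y₂)` of the source. -/
def pY2m (pX : X → ℝ) (W2 : X → Y2 → ℝ) : Y2 → ℝ := fun y2 => ∑ x, pX x * W2 x y2

/-- `p(u₁|x) = Σ_{y₁} p(y₁|x) p(u₁|y₁)`. -/
def pU1X (W1 : X → Y1 → ℝ) (p1 : Y1 → U1 → ℝ) : X → U1 → ℝ :=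
  fun x u1 => ∑ y1, W1 x y1 * p1 y1 u1

/-- `p(u₂|x) = Σ_{y₂} p(y₂|x) p(u₂|y₂)`. -/
def pU2X (W2 : X → Y2 → ℝ) (p2 : Y2 → U2 → ℝ) : X → U2 → ℝ :=
  fun x u2 => ∑ y2, W2 x y2 * p2 y2 u2

/-- `p(u₁,u₂,x) = p(x) p(u₁|x) p(u₂|x)`. -/
def pUUX (pX : X → ℝ) (W1 : X → Y1 → ℝ) (W2 : X → Y2 → ℝ)
    (p1 : Y1 → U1 → ℝ) (p2 : Y2 → U2 → ℝ) : U1 × U2 × X → ℝ :=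
  fun z => pX z.2.2 * pU1X W1 p1 z.2.2 z.1 * pU2X W2 p2 z.2.2 z.2.1

/-- `p(u₁,u₂)`. -/
def pUU (pX : X → ℝ) (W1 : X → Y1 → ℝ) (W2 : X → Y2 → ℝ)
    (p1 : Y1 → U1 → ℝ) (p2 : Y2 → U2 → ℝ) : U1 × U2 → ℝ :=
  fun u => ∑ x, pUUX pX W1 W2 p1 p2 (u.1, u.2, x)

/-- `p(u₂) = Σ_{y₂} p(y₂) p(u₂|y₂)`. -/
def pU2m (pX : X → ℝ) (W2 : X → Y2 → ℝ) (p2 : Y2 → U2 → ℝ) : U2 → ℝ :=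
  fun u2 => ∑ y2, pY2m pX W2 y2 * p2 y2 u2

/-- The Blahut–Arimoto functional `F_s(P,Q)` (real-valued version; the convention
`0 · log 0 = 0` is automatic since vanishing coefficients kill the corresponding terms). -/
def FsPQ (s1 s2 : ℝ) (pX : X → ℝ) (W1 : X → Y1 → ℝ) (W2 : X → Y2 → ℝ)
    (p1 : Y1 → U1 → ℝ) (p2 : Y2 → U2 → ℝ)
    (qX : U1 × U2 → X → ℝ) (qUU : U1 × U2 → ℝ) (qU2 : U2 → ℝ) : ℝ :=
  -(∑ u1, ∑ u2, ∑ x, pUUX pX W1 W2 p1 p2 (u1, u2, x) * Real.log (qX (u1, u2) x))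
  - s1 * (∑ u1, ∑ u2, pUU pX W1 W2 p1 p2 (u1, u2) * Real.log (qUU (u1, u2)))
  - s2 * (∑ u2, pU2m pX W2 p2 u2 * Real.log (qU2 u2))
  + s1 * (∑ u1, ∑ y1, p1 y1 u1 * pY1m pX W1 y1 * Real.log (p1 y1 u1))
  + s2 * (∑ u2, ∑ y2, p2 y2 u2 * pY2m pX W2 y2 * Real.log (p2 y2 u2))
  + s1 * (∑ u2, pU2m pX W2 p2 u2 * Real.log (pU2m pX W2 p2 u2))

/-- The extended-real value of a term `−a · log q`: it is `+∞` if `a > 0` and `q = 0`. -/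
def nlogE (a q : ℝ) : EReal := if 0 < a ∧ q = 0 then ⊤ else ((-(a * Real.log q) : ℝ) : EReal)

/-- The Blahut–Arimoto functional `F_s(P,Q)`, with values in `ℝ ∪ {+∞}`
(a term `−a log q` with `a > 0` and `q = 0` is `+∞`). -/
def FsPQE (s1 s2 : ℝ) (pX : X → ℝ) (W1 : X → Y1 → ℝ) (W2 : X → Y2 → ℝ)
    (p1 : Y1 → U1 → ℝ) (p2 : Y2 → U2 → ℝ)
    (qX : U1 × U2 → X → ℝ) (qUU : U1 × U2 → ℝ) (qU2 : U2 → ℝ) : EReal :=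
  (∑ u1, ∑ u2, ∑ x, nlogE (pUUX pX W1 W2 p1 p2 (u1, u2, x)) (qX (u1, u2) x))
  + (s1 : EReal) * (∑ u1, ∑ u2, nlogE (pUU pX W1 W2 p1 p2 (u1, u2)) (qUU (u1, u2)))
  + (s2 : EReal) * (∑ u2, nlogE (pU2m pX W2 p2 u2) (qU2 u2))
  + ((s1 * (∑ u1, ∑ y1, p1 y1 u1 * pY1m pX W1 y1 * Real.log (p1 y1 u1))
      + s2 * (∑ u2, ∑ y2, p2 y2 u2 * pY2m pX W2 y2 * Real.log (p2 y2 u2))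
      + s1 * (∑ u2, pU2m pX W2 p2 u2 * Real.log (pU2m pX W2 p2 u2)) : ℝ) : EReal)

/-- Marginal `p(u₁)`. -/
def mU1 (j : X × Y1 × Y2 × U1 × U2 → ℝ) : U1 → ℝ := fun u1 => ∑ u2, mU12 j (u1, u2)

/-- Marginal `p(y₂,u₁,u₂)`. -/
def mY2U (j : X × Y1 × Y2 × U1 × U2 → ℝ) : Y2 × U1 × U2 → ℝ :=
  fun z => ∑ x, ∑ y1, j (x, y1, z.1, z.2.1, z.2.2)

/-- Marginal `p(y₂,u₁)`. -/
def mY2U1 (j : X × Y1 × Y2 × U1 × U2 → ℝ) : Y2 × U1 → ℝ :=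
  fun z => ∑ u2, mY2U j (z.1, z.2, u2)

/-- Marginal `p(y₁)`. -/
def mY1 (j : X × Y1 × Y2 × U1 × U2 → ℝ) : Y1 → ℝ := fun y1 => ∑ u2, mY1U2 j (y1, u2)

/-- Marginal `p(y₁,u₁)`. -/
def mY1U1 (j : X × Y1 × Y2 × U1 × U2 → ℝ) : Y1 × U1 → ℝ :=
  fun z => ∑ u2, mY1U j (z.1, z.2, u2)

/-- Conditional mutual information `I(Y₂;U₂|U₁)`. -/
def I2c (j : X × Y1 × Y2 × U1 × U2 → ℝ) : ℝ :=
  ent (mY2U1 j) + ent (mU12 j) - ent (mU1 j) - ent (mY2U j)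

/-- Mutual information `I(Y₁;U₁)`. -/
def I1m (j : X × Y1 × Y2 × U1 × U2 → ℝ) : ℝ := ent (mY1 j) + ent (mU1 j) - ent (mY1U1 j)

/-- `D²_CEO(R₁,R₂)`: the minimal `H(X|U₁,U₂)` subject to `I(Y₂;U₂|U₁) ≤ R₂`
and `I(Y₁;U₁) ≤ R₁`. -/
def Dceo2 (V1 V2 : Type) [Fintype V1] [Fintype V2]
    (pX : X → ℝ) (W1 : X → Y1 → ℝ) (W2 : X → Y2 → ℝ) (R1 R2 : ℝ) : ℝ :=
  sInf {d : ℝ | ∃ p1 : Y1 → V1 → ℝ, ∃ p2 : Y2 → V2 → ℝ, IsChan p1 ∧ IsChan p2 ∧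
    I2c (ceoJoint pX W1 W2 p1 p2) ≤ R2 ∧ I1m (ceoJoint pX W1 W2 p1 p2) ≤ R1 ∧
    d = condHX (ceoJoint pX W1 W2 p1 p2)}

variable {Qt : Type} [Fintype Qt]

/-- The joint pmf `p(q,x,y₁,y₂,u₁,u₂) = p(q)p(x)p(y₁|x)p(y₂|x)p(u₁|y₁,q)p(u₂|y₂,q)`
induced by a time-sharing variable `Q` and conditional test channels. -/
def ceoJointQ (pQ : Qt → ℝ) (pX : X → ℝ) (W1 : X → Y1 → ℝ) (W2 : X → Y2 → ℝ)
    (c1 : Qt → Y1 → U1 → ℝ) (c2 : Qt → Y2 → U2 → ℝ) :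
    Qt × X × Y1 × Y2 × U1 × U2 → ℝ :=
  fun z => pQ z.1 * pX z.2.1 * W1 z.2.1 z.2.2.1 * W2 z.2.1 z.2.2.2.1
    * c1 z.1 z.2.2.1 z.2.2.2.2.1 * c2 z.1 z.2.2.2.1 z.2.2.2.2.2

/-- Marginal `p(u₁,u₂,q)`. -/
def mqU12 (j : Qt × X × Y1 × Y2 × U1 × U2 → ℝ) : U1 × U2 × Qt → ℝ :=
  fun z => ∑ x, ∑ y1, ∑ y2, j (z.2.2, x, y1, y2, z.1, z.2.1)

/-- Marginal `p(u₂,q)`. -/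
def mqU2 (j : Qt × X × Y1 × Y2 × U1 × U2 → ℝ) : U2 × Qt → ℝ :=
  fun z => ∑ u1, mqU12 j (u1, z.1, z.2)

/-- Marginal `p(u₁,q)`. -/
def mqU1 (j : Qt × X × Y1 × Y2 × U1 × U2 → ℝ) : U1 × Qt → ℝ :=
  fun z => ∑ u2, mqU12 j (z.1, u2, z.2)

/-- Marginal `p(y₁,u₂,q)`. -/
def mqY1U2 (j : Qt × X × Y1 × Y2 × U1 × U2 → ℝ) : Y1 × U2 × Qt → ℝ :=
  fun z => ∑ x, ∑ y2, ∑ u1, j (z.2.2, x, z.1, y2, u1, z.2.1)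

/-- Marginal `p(y₁,u₁,u₂,q)`. -/
def mqY1U12 (j : Qt × X × Y1 × Y2 × U1 × U2 → ℝ) : Y1 × U1 × U2 × Qt → ℝ :=
  fun z => ∑ x, ∑ y2, j (z.2.2.2, x, z.1, y2, z.2.1, z.2.2.1)

/-- Marginal `p(y₂,u₁,q)`. -/
def mqY2U1 (j : Qt × X × Y1 × Y2 × U1 × U2 → ℝ) : Y2 × U1 × Qt → ℝ :=
  fun z => ∑ x, ∑ y1, ∑ u2, j (z.2.2, x, y1, z.1, z.2.1, u2)

/-- Marginal `p(y₂,u₁,u₂,q)`. -/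
def mqY2U12 (j : Qt × X × Y1 × Y2 × U1 × U2 → ℝ) : Y2 × U1 × U2 × Qt → ℝ :=
  fun z => ∑ x, ∑ y1, j (z.2.2.2, x, y1, z.1, z.2.1, z.2.2.1)

/-- Marginal `p(y₁,y₂,q)`. -/
def mqY12 (j : Qt × X × Y1 × Y2 × U1 × U2 → ℝ) : Y1 × Y2 × Qt → ℝ :=
  fun z => ∑ x, ∑ u1, ∑ u2, j (z.2.2, x, z.1, z.2.1, u1, u2)

/-- Marginal `p(q)`. -/
def mqQ (j : Qt × X × Y1 × Y2 × U1 × U2 → ℝ) : Qt → ℝ :=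
  fun q => ∑ y1, ∑ y2, mqY12 j (y1, y2, q)

/-- Marginal `p(y₁,y₂,u₁,u₂,q)`. -/
def mqY12U12 (j : Qt × X × Y1 × Y2 × U1 × U2 → ℝ) : Y1 × Y2 × U1 × U2 × Qt → ℝ :=
  fun z => ∑ x, j (z.2.2.2.2, x, z.1, z.2.1, z.2.2.1, z.2.2.2.1)

/-- Marginal `p(x,u₁,u₂,q)`. -/
def mqXU12 (j : Qt × X × Y1 × Y2 × U1 × U2 → ℝ) : X × U1 × U2 × Qt → ℝ :=
  fun z => ∑ y1, ∑ y2, j (z.2.2.2, z.1, y1, y2, z.2.1, z.2.2.1)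

/-- Conditional mutual information `I(U₁;Y₁|U₂,Q)`. -/
def IQ1 (j : Qt × X × Y1 × Y2 × U1 × U2 → ℝ) : ℝ :=
  ent (mqY1U2 j) + ent (mqU12 j) - ent (mqU2 j) - ent (mqY1U12 j)

/-- Conditional mutual information `I(U₂;Y₂|U₁,Q)`. -/
def IQ2 (j : Qt × X × Y1 × Y2 × U1 × U2 → ℝ) : ℝ :=
  ent (mqY2U1 j) + ent (mqU12 j) - ent (mqU1 j) - ent (mqY2U12 j)

/-- Conditional mutual information `I(U₁,U₂;Y₁,Y₂|Q)`. -/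
def IQsum (j : Qt × X × Y1 × Y2 × U1 × U2 → ℝ) : ℝ :=
  ent (mqY12 j) + ent (mqU12 j) - ent (mqQ j) - ent (mqY12U12 j)

/-- Conditional entropy `H(X|U₁,U₂,Q)`. -/
def HXQ (j : Qt × X × Y1 × Y2 × U1 × U2 → ℝ) : ℝ := ent (mqXU12 j) - ent (mqU12 j)

set_option linter.unusedSectionVars false

lemma subadd {α β : Type} [Fintype α] [Fintype β] (g : α → β → ℝ) (hg : ∀ a b, 0 ≤ g a b) :
    ∑ a, ∑ b, Real.negMulLog (g a b) + Real.negMulLog (∑ a, ∑ b, g a b) ≤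
      ∑ a, Real.negMulLog (∑ b, g a b) + ∑ b, Real.negMulLog (∑ a, g a b) := by
  set T := ∑ a, ∑ b, g a b with hT
  set r : α → ℝ := fun a => ∑ b, g a b with hr
  set c : β → ℝ := fun b => ∑ a, g a b with hc
  have hTr : T = ∑ a, r a := rfl
  have hTc : T = ∑ b, c b := by rw [hT, Finset.sum_comm]
  have hr0 : ∀ a, 0 ≤ r a := fun a => Finset.sum_nonneg fun b _ => hg a b
  have hc0 : ∀ b, 0 ≤ c b := fun b => Finset.sum_nonneg fun a _ => hg a b
  have hT0 : 0 ≤ T := Finset.sum_nonneg fun a _ => hr0 a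
  have key : ∀ a b, g a b - r a * c b / T ≤
      g a b * Real.log (g a b) + g a b * Real.log T - g a b * Real.log (r a)
        - g a b * Real.log (c b) := by
    intro a b
    rcases (hg a b).eq_or_lt with h | h
    · rw [← h]
      have : 0 ≤ r a * c b / T := div_nonneg (mul_nonneg (hr0 a) (hc0 b)) hT0
      simp; exact this
    · have h1 : g a b ≤ r a := Finset.single_le_sum (f := fun b => g a b)
        (fun b _ => hg a b) (Finset.mem_univ b)
      have h2 : g a b ≤ c b := Finset.single_le_sum (f := fun a => g a b)
        (fun a _ => hg a b) (Finset.mem_univ a)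
      have h3 : r a ≤ T := Finset.single_le_sum (f := r) (fun a _ => hr0 a) (Finset.mem_univ a)
      have pr : 0 < r a := by linarith
      have pc : 0 < c b := by linarith
      have pT : 0 < T := by linarith
      have hx : 0 < r a * c b / (T * g a b) := by positivity
      have := Real.log_le_sub_one_of_pos hx
      rw [Real.log_div (by positivity) (by positivity), Real.log_mul pr.ne' pc.ne',
        Real.log_mul pT.ne' h.ne'] at this
      have h4 := mul_le_mul_of_nonneg_left this h.le
      have h5 : g a b * (r a * c b / (T * g a b) - 1) = r a * c b / T - g a b := by
        field_simp
      rw [h5] at h4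
      linarith
  have hsum := Finset.sum_le_sum fun a (_ : a ∈ Finset.univ) =>
    Finset.sum_le_sum fun b (_ : b ∈ Finset.univ) => key a b
  have hL : ∑ a, ∑ b, (g a b - r a * c b / T) = 0 := by
    simp only [Finset.sum_sub_distrib, ← Finset.sum_div, ← Finset.mul_sum, ← Finset.sum_mul]
    rw [← hTr, ← hTc]
    by_cases h : T = 0
    · simp [h]
    · field_simp; simp
  have e1 : ∑ a, ∑ b, g a b * Real.log (r a) = ∑ a, r a * Real.log (r a) := by
    simp only [hr, Finset.sum_mul]
  have e2 : ∑ a, ∑ b, g a b * Real.log (c b) = ∑ b, c b * Real.log (c b) := by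
    rw [Finset.sum_comm]; simp only [hc, Finset.sum_mul]
  have e3 : ∑ a, ∑ b, g a b * Real.log T = T * Real.log T := by
    simp only [← Finset.sum_mul]; rfl
  rw [hL] at hsum
  simp only [Finset.sum_sub_distrib, Finset.sum_add_distrib, e1, e2, e3] at hsum
  simp only [Real.negMulLog, neg_mul, Finset.sum_neg_distrib]
  linarith

/-- Entropy of an input pushed through a channel. -/
lemma nml_chan {β : Type} [Fintype β] (t : ℝ) (w : β → ℝ) (hw : ∑ b, w b = 1) :
    ∑ b, Real.negMulLog (t * w b) = Real.negMulLog t + t * ent w := by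
  simp only [Real.negMulLog_mul, Finset.sum_add_distrib, ← Finset.sum_mul, ← Finset.mul_sum, hw,
    ent, one_mul]

lemma entQ {Q α β : Type} [Fintype Q] [Fintype α] [Fintype β] (e : Q × α ≃ β) (p : Q → ℝ)
    (g : Q → α → ℝ) (hg : ∀ q, ∑ a, g q a = 1) (F : β → ℝ)
    (hF : ∀ q a, F (e (q, a)) = p q * g q a) :
    ent F = ent p + ∑ q, p q * ent (g q) := by
  unfold ent
  rw [← e.sum_comp, Fintype.sum_prod_type, ← Finset.sum_add_distrib]
  refine Finset.sum_congr rfl fun q _ => ?_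
  simp only [hF]
  exact nml_chan _ _ (hg q)

section
variable (pX : X → ℝ) (W1 : X → Y1 → ℝ) (W2 : X → Y2 → ℝ)
    (p1 : Y1 → U1 → ℝ) (p2 : Y2 → U2 → ℝ)

lemma pU1X_sum (hW1 : IsChan W1) (h1 : IsChan p1) (x : X) : ∑ u, pU1X W1 p1 x u = 1 := by
  unfold pU1X
  rw [Finset.sum_comm]
  simp only [← Finset.mul_sum, (h1 _).2, mul_one, (hW1 x).2]

lemma pU1X_nonneg (hW1 : IsChan W1) (h1 : IsChan p1) (x : X) (u : U1) : 0 ≤ pU1X W1 p1 x u :=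
  Finset.sum_nonneg fun y _ => mul_nonneg ((hW1 x).1 y) ((h1 y).1 u)

lemma mXU_eq (x : X) (u1 : U1) (u2 : U2) : mXU (ceoJoint pX W1 W2 p1 p2) (x, u1, u2)
    = pX x * pU1X W1 p1 x u1 * pU1X W2 p2 x u2 := by
  simp only [mXU, ceoJoint, pU1X, Finset.mul_sum, Finset.sum_mul]
  rw [Finset.sum_comm]
  refine Finset.sum_congr rfl fun _ _ => Finset.sum_congr rfl fun _ _ => by ring

lemma mU12_eq (u1 : U1) (u2 : U2) : mU12 (ceoJoint pX W1 W2 p1 p2) (u1, u2)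
    = ∑ x, pX x * pU1X W1 p1 x u1 * pU1X W2 p2 x u2 := by
  simp only [mU12, mXU_eq]

lemma mY1U_eq (y1 : Y1) (u1 : U1) (u2 : U2) : mY1U (ceoJoint pX W1 W2 p1 p2) (y1, u1, u2)
    = (∑ x, pX x * W1 x y1 * pU1X W2 p2 x u2) * p1 y1 u1 := by
  simp only [mY1U, ceoJoint, pU1X, Finset.mul_sum, Finset.sum_mul]
  refine Finset.sum_congr rfl fun _ _ => Finset.sum_congr rfl fun _ _ => by ring

lemma mY2U_eq (y2 : Y2) (u1 : U1) (u2 : U2) : mY2U (ceoJoint pX W1 W2 p1 p2) (y2, u1, u2)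
    = (∑ x, pX x * W2 x y2 * pU1X W1 p1 x u1) * p2 y2 u2 := by
  simp only [mY2U, ceoJoint, pU1X, Finset.mul_sum, Finset.sum_mul]
  refine Finset.sum_congr rfl fun _ _ => Finset.sum_congr rfl fun _ _ => by ring

variable (hpX : IsPmf pX) (hW1 : IsChan W1) (hW2 : IsChan W2) (h1 : IsChan p1) (h2 : IsChan p2)

lemma mY1U2_eq (h1 : IsChan p1) (y1 : Y1) (u2 : U2) : mY1U2 (ceoJoint pX W1 W2 p1 p2) (y1, u2)
    = ∑ x, pX x * W1 x y1 * pU1X W2 p2 x u2 := by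
  simp only [mY1U2, mY1U_eq, ← Finset.mul_sum, (h1 _).2, mul_one]

lemma mY2U1_eq (h2 : IsChan p2) (y2 : Y2) (u1 : U1) : mY2U1 (ceoJoint pX W1 W2 p1 p2) (y2, u1)
    = ∑ x, pX x * W2 x y2 * pU1X W1 p1 x u1 := by
  simp only [mY2U1, mY2U_eq, ← Finset.mul_sum, (h2 _).2, mul_one]

lemma mY1_eq (hW2 : IsChan W2) (h1 : IsChan p1) (h2 : IsChan p2) (y1 : Y1) :
    mY1 (ceoJoint pX W1 W2 p1 p2) y1 = pY1m pX W1 y1 := by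
  simp only [mY1, mY1U2_eq _ _ _ _ _ h1, pY1m]
  rw [Finset.sum_comm]
  simp only [← Finset.mul_sum, pU1X_sum _ _ hW2 h2, mul_one]

lemma mY2U2_eq (hW1 : IsChan W1) (h1 : IsChan p1) (y2 : Y2) (u2 : U2) :
    mY2U2 (ceoJoint pX W1 W2 p1 p2) (y2, u2) = pY1m pX W2 y2 * p2 y2 u2 := by
  simp only [mY2U2, ceoJoint, pY1m, Finset.sum_mul]
  refine Finset.sum_congr rfl fun x _ => ?_
  simp only [← Finset.mul_sum, ← Finset.sum_mul, (h1 _).2, (hW1 x).2, mul_one]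

lemma mY2_eq (hW1 : IsChan W1) (h1 : IsChan p1) (h2 : IsChan p2) (y2 : Y2) :
    mY2 (ceoJoint pX W1 W2 p1 p2) y2 = pY1m pX W2 y2 := by
  simp only [mY2, mY2U2_eq _ _ _ _ _ hW1 h1, ← Finset.mul_sum, (h2 _).2, mul_one]

lemma mY1U1_eq (hW2 : IsChan W2) (h2 : IsChan p2) (y1 : Y1) (u1 : U1) :
    mY1U1 (ceoJoint pX W1 W2 p1 p2) (y1, u1) = pY1m pX W1 y1 * p1 y1 u1 := by
  simp only [mY1U1, mY1U_eq, pY1m, ← Finset.sum_mul]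
  rw [Finset.sum_comm]
  simp only [← Finset.mul_sum, pU1X_sum _ _ hW2 h2, mul_one]

lemma mU1_eq (hW2 : IsChan W2) (h2 : IsChan p2) (u1 : U1) :
    mU1 (ceoJoint pX W1 W2 p1 p2) u1 = ∑ x, pX x * pU1X W1 p1 x u1 := by
  simp only [mU1, mU12_eq]
  rw [Finset.sum_comm]
  simp only [← Finset.mul_sum, pU1X_sum _ _ hW2 h2, mul_one]

lemma mU2_eq (hW1 : IsChan W1) (h1 : IsChan p1) (u2 : U2) :
    mU2 (ceoJoint pX W1 W2 p1 p2) u2 = ∑ x, pX x * pU1X W2 p2 x u2 := by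
  simp only [mU2, mU12_eq]
  rw [Finset.sum_comm]
  simp only [← Finset.mul_sum, ← Finset.sum_mul, pU1X_sum _ _ hW1 h1, mul_one]

lemma pY1m_sum (hpX : IsPmf pX) (hW1 : IsChan W1) : ∑ y, pY1m pX W1 y = 1 := by
  simp only [pY1m]
  rw [Finset.sum_comm]
  simp only [← Finset.mul_sum, (hW1 _).2, mul_one, hpX.2]

/-- conditional entropy of a channel output given its input -/
def hC (p : X → ℝ) (W : X → Y1 → ℝ) (c : Y1 → U1 → ℝ) : ℝ := ∑ y, pY1m p W y * ent (c y)

lemma ent_mY1U (hW2 : IsChan W2) (h1 : IsChan p1) (h2 : IsChan p2) :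
    ent (mY1U (ceoJoint pX W1 W2 p1 p2)) =
    ent (mY1U2 (ceoJoint pX W1 W2 p1 p2)) + hC pX W1 p1 := by
  have : hC pX W1 p1 = ∑ y, ∑ u2, mY1U2 (ceoJoint pX W1 W2 p1 p2) (y, u2) * ent (p1 y) := by
    simp only [hC, ← Finset.sum_mul]
    exact Finset.sum_congr rfl fun y _ => by rw [← mY1_eq pX W1 W2 p1 p2 hW2 h1 h2]; rfl
  rw [this]
  simp only [ent, Fintype.sum_prod_type, ← Finset.sum_add_distrib]
  refine Finset.sum_congr rfl fun y _ => ?_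
  rw [Finset.sum_comm]
  refine Finset.sum_congr rfl fun u _ => ?_
  simp only [mY1U_eq, mY1U2_eq _ _ _ _ _ h1]
  exact nml_chan _ _ (h1 y).2

lemma ent_mY2U (hW1 : IsChan W1) (h1 : IsChan p1) (h2 : IsChan p2) :
    ent (mY2U (ceoJoint pX W1 W2 p1 p2)) =
    ent (mY2U1 (ceoJoint pX W1 W2 p1 p2)) + hC pX W2 p2 := by
  have : hC pX W2 p2 = ∑ y, ∑ u, mY2U1 (ceoJoint pX W1 W2 p1 p2) (y, u) * ent (p2 y) := by
    simp only [hC, ← Finset.sum_mul]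
    refine Finset.sum_congr rfl fun y _ => ?_
    congr 1
    simp only [mY2U1_eq _ _ _ _ _ h2]
    rw [Finset.sum_comm]
    simp only [← Finset.mul_sum, pU1X_sum _ _ hW1 h1, mul_one, pY1m]
  rw [this]
  simp only [ent, Fintype.sum_prod_type, ← Finset.sum_add_distrib]
  refine Finset.sum_congr rfl fun y _ => ?_
  refine Finset.sum_congr rfl fun u _ => ?_
  simp only [mY2U_eq, mY2U1_eq _ _ _ _ _ h2]
  exact nml_chan _ _ (h2 y).2

lemma ent_mY1U1 (hW2 : IsChan W2) (h1 : IsChan p1) (h2 : IsChan p2) :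
    ent (mY1U1 (ceoJoint pX W1 W2 p1 p2)) =
    ent (mY1 (ceoJoint pX W1 W2 p1 p2)) + hC pX W1 p1 := by
  simp only [ent, hC, Fintype.sum_prod_type, ← Finset.sum_add_distrib,
    mY1U1_eq _ _ _ _ _ hW2 h2, mY1_eq _ _ _ _ _ hW2 h1 h2]
  exact Finset.sum_congr rfl fun y _ => nml_chan _ _ (h1 y).2

lemma ent_mY2U2 (hW1 : IsChan W1) (h1 : IsChan p1) (h2 : IsChan p2) :
    ent (mY2U2 (ceoJoint pX W1 W2 p1 p2)) =
    ent (mY2 (ceoJoint pX W1 W2 p1 p2)) + hC pX W2 p2 := by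
  simp only [ent, hC, Fintype.sum_prod_type, ← Finset.sum_add_distrib,
    mY2U2_eq _ _ _ _ _ hW1 h1, mY2_eq _ _ _ _ _ hW1 h1 h2]
  exact Finset.sum_congr rfl fun y _ => nml_chan _ _ (h2 y).2

lemma I1m_eq (hW2 : IsChan W2) (h1 : IsChan p1) (h2 : IsChan p2) :
    I1m (ceoJoint pX W1 W2 p1 p2) = ent (mU1 (ceoJoint pX W1 W2 p1 p2)) - hC pX W1 p1 := by
  rw [I1m, ent_mY1U1 _ _ _ _ _ hW2 h1 h2]; ring

lemma I2m_eq (hW1 : IsChan W1) (h1 : IsChan p1) (h2 : IsChan p2) :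
    I2m (ceoJoint pX W1 W2 p1 p2) = ent (mU2 (ceoJoint pX W1 W2 p1 p2)) - hC pX W2 p2 := by
  rw [I2m, ent_mY2U2 _ _ _ _ _ hW1 h1 h2]; ring

lemma I1c_eq (hW2 : IsChan W2) (h1 : IsChan p1) (h2 : IsChan p2) :
    I1c (ceoJoint pX W1 W2 p1 p2) = ent (mU12 (ceoJoint pX W1 W2 p1 p2))
      - ent (mU2 (ceoJoint pX W1 W2 p1 p2)) - hC pX W1 p1 := by
  rw [I1c, ent_mY1U _ _ _ _ _ hW2 h1 h2]; ring

lemma I2c_eq (hW1 : IsChan W1) (h1 : IsChan p1) (h2 : IsChan p2) :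
    I2c (ceoJoint pX W1 W2 p1 p2) = ent (mU12 (ceoJoint pX W1 W2 p1 p2))
      - ent (mU1 (ceoJoint pX W1 W2 p1 p2)) - hC pX W2 p2 := by
  rw [I2c, ent_mY2U _ _ _ _ _ hW1 h1 h2]; ring

lemma mU12_sum (hpX : IsPmf pX) (hW1 : IsChan W1) (hW2 : IsChan W2)
    (h1 : IsChan p1) (h2 : IsChan p2) :
    ∑ u1, ∑ u2, mU12 (ceoJoint pX W1 W2 p1 p2) (u1, u2) = 1 := by
  change ∑ u1, mU1 (ceoJoint pX W1 W2 p1 p2) u1 = 1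
  simp only [mU1_eq _ _ _ _ _ hW2 h2]
  rw [Finset.sum_comm]
  simp only [← Finset.mul_sum, pU1X_sum _ _ hW1 h1, mul_one, hpX.2]

lemma ent_U_subadd (hpX : IsPmf pX) (hW1 : IsChan W1) (hW2 : IsChan W2)
    (h1 : IsChan p1) (h2 : IsChan p2) :
    ent (mU12 (ceoJoint pX W1 W2 p1 p2)) ≤
      ent (mU1 (ceoJoint pX W1 W2 p1 p2)) + ent (mU2 (ceoJoint pX W1 W2 p1 p2)) := by
  have := subadd (fun u1 u2 => mU12 (ceoJoint pX W1 W2 p1 p2) (u1, u2)) (fun u1 u2 => by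
    rw [mU12_eq]
    exact Finset.sum_nonneg fun x _ => mul_nonneg (mul_nonneg (hpX.1 x)
      (pU1X_nonneg _ _ hW1 h1 _ _)) (pU1X_nonneg _ _ hW2 h2 _ _))
  rw [mU12_sum _ _ _ _ _ hpX hW1 hW2 h1 h2, Real.negMulLog_one, add_zero] at this
  simp only [ent, Fintype.sum_prod_type]
  exact this

lemma I1c_le (hpX : IsPmf pX) (hW1 : IsChan W1) (hW2 : IsChan W2)
    (h1 : IsChan p1) (h2 : IsChan p2) :
    I1c (ceoJoint pX W1 W2 p1 p2) ≤ I1m (ceoJoint pX W1 W2 p1 p2) := by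
  rw [I1c_eq _ _ _ _ _ hW2 h1 h2, I1m_eq _ _ _ _ _ hW2 h1 h2]
  linarith [ent_U_subadd _ _ _ _ _ hpX hW1 hW2 h1 h2]

lemma I2c_le (hpX : IsPmf pX) (hW1 : IsChan W1) (hW2 : IsChan W2)
    (h1 : IsChan p1) (h2 : IsChan p2) :
    I2c (ceoJoint pX W1 W2 p1 p2) ≤ I2m (ceoJoint pX W1 W2 p1 p2) := by
  rw [I2c_eq _ _ _ _ _ hW1 h1 h2, I2m_eq _ _ _ _ _ hW1 h1 h2]
  linarith [ent_U_subadd _ _ _ _ _ hpX hW1 hW2 h1 h2]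

lemma I1c_nonneg (hpX : IsPmf pX) (hW1 : IsChan W1) (hW2 : IsChan W2)
    (h1 : IsChan p1) (h2 : IsChan p2) : 0 ≤ I1c (ceoJoint pX W1 W2 p1 p2) := by
  set j := ceoJoint pX W1 W2 p1 p2 with hj
  have hm : ∀ u1 u2, ∑ y, mY1U j (y, u1, u2) = mU12 j (u1, u2) := by
    intro u1 u2
    simp only [hj, mY1U_eq, mU12_eq, Finset.sum_mul]
    rw [Finset.sum_comm]
    refine Finset.sum_congr rfl fun x _ => ?_
    simp only [pU1X, Finset.mul_sum, Finset.sum_mul]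
    rw [Finset.sum_comm]
    exact Finset.sum_congr rfl fun y _ => Finset.sum_congr rfl fun _ _ => by ring
  have key := Finset.sum_le_sum fun u2 (_ : u2 ∈ (Finset.univ : Finset U2)) =>
    subadd (fun y u1 => mY1U j (y, u1, u2)) (fun y u1 => by
      rw [hj, mY1U_eq]
      exact mul_nonneg (Finset.sum_nonneg fun x _ => mul_nonneg (mul_nonneg (hpX.1 x)
        ((hW1 _).1 _)) (pU1X_nonneg _ _ hW2 h2 _ _)) ((h1 _).1 _))
  simp only [Finset.sum_add_distrib, hm] at key
  have hm2 : ∀ u2, ∑ y, ∑ u1, mY1U j (y, u1, u2) = mU2 j u2 := by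
    intro u2
    rw [Finset.sum_comm]; simp only [hm]; rfl
  simp only [hm2] at key
  have e1 : ent (mY1U j) = ∑ u2, ∑ y, ∑ u1, Real.negMulLog (mY1U j (y, u1, u2)) := by
    simp only [ent, Fintype.sum_prod_type]
    rw [Finset.sum_comm (s := (Finset.univ : Finset U2))]
    exact Finset.sum_congr rfl fun y _ => Finset.sum_comm
  have e2 : ent (mY1U2 j) = ∑ u2, ∑ y, Real.negMulLog (∑ u1, mY1U j (y, u1, u2)) := by
    simp only [ent, Fintype.sum_prod_type]
    rw [Finset.sum_comm]; rfl
  have e3 : ent (mU12 j) = ∑ u2, ∑ u1, Real.negMulLog (mU12 j (u1, u2)) := by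
    simp only [ent, Fintype.sum_prod_type]
    rw [Finset.sum_comm]
  rw [← e1, ← e2, ← e3] at key
  have e4 : ent (mU2 j) = ∑ u2, Real.negMulLog (mU2 j u2) := rfl
  rw [← e4] at key
  rw [I1c]; linarith

lemma I2c_nonneg (hpX : IsPmf pX) (hW1 : IsChan W1) (hW2 : IsChan W2)
    (h1 : IsChan p1) (h2 : IsChan p2) : 0 ≤ I2c (ceoJoint pX W1 W2 p1 p2) := by
  set j := ceoJoint pX W1 W2 p1 p2 with hj
  have hm : ∀ u1 u2, ∑ y, mY2U j (y, u1, u2) = mU12 j (u1, u2) := by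
    intro u1 u2
    simp only [hj, mY2U_eq, mU12_eq, Finset.sum_mul]
    rw [Finset.sum_comm]
    refine Finset.sum_congr rfl fun x _ => ?_
    simp only [pU1X, Finset.mul_sum, Finset.sum_mul]
    exact Finset.sum_congr rfl fun y _ => Finset.sum_congr rfl fun _ _ => by ring
  have key := Finset.sum_le_sum fun u1 (_ : u1 ∈ (Finset.univ : Finset U1)) =>
    subadd (fun y u2 => mY2U j (y, u1, u2)) (fun y u2 => by
      rw [hj, mY2U_eq]
      exact mul_nonneg (Finset.sum_nonneg fun x _ => mul_nonneg (mul_nonneg (hpX.1 x)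
        ((hW2 _).1 _)) (pU1X_nonneg _ _ hW1 h1 _ _)) ((h2 _).1 _))
  simp only [Finset.sum_add_distrib, hm] at key
  have hm2 : ∀ u1, ∑ y, ∑ u2, mY2U j (y, u1, u2) = mU1 j u1 := by
    intro u1
    rw [Finset.sum_comm]; simp only [hm]; rfl
  simp only [hm2] at key
  have e1 : ent (mY2U j) = ∑ u1, ∑ y, ∑ u2, Real.negMulLog (mY2U j (y, u1, u2)) := by
    simp only [ent, Fintype.sum_prod_type]
    rw [Finset.sum_comm]
  have e2 : ent (mY2U1 j) = ∑ u1, ∑ y, Real.negMulLog (∑ u2, mY2U j (y, u1, u2)) := by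
    simp only [ent, Fintype.sum_prod_type]
    rw [Finset.sum_comm]; rfl
  have e3 : ent (mU12 j) = ∑ u1, ∑ u2, Real.negMulLog (mU12 j (u1, u2)) := by
    simp only [ent, Fintype.sum_prod_type]
  rw [← e1, ← e2, ← e3] at key
  have e4 : ent (mU1 j) = ∑ u1, Real.negMulLog (mU1 j u1) := rfl
  rw [← e4] at key
  rw [I2c]; linarith

end

section
variable (pX : X → ℝ) (W1 : X → Y1 → ℝ) (W2 : X → Y2 → ℝ)

/-- source marginal of `(Y₁,Y₂)` -/
def gY12 : Y1 × Y2 → ℝ := fun z => ∑ x, pX x * W1 x z.1 * W2 x z.2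

/-- marginal of `(Y₁,Y₂,U₁,U₂)` -/
def gY12U (p1 : Y1 → U1 → ℝ) (p2 : Y2 → U2 → ℝ) : (Y1 × Y2) × U1 × U2 → ℝ :=
  fun z => gY12 pX W1 W2 z.1 * (p1 z.1.1 z.2.1 * p2 z.1.2 z.2.2)

lemma gY12_sum1 (hW2 : IsChan W2) (y1 : Y1) : ∑ y2, gY12 pX W1 W2 (y1, y2) = pY1m pX W1 y1 := by
  simp only [gY12, pY1m]
  rw [Finset.sum_comm]
  simp only [← Finset.mul_sum, (hW2 _).2, mul_one]

lemma gY12_sum2 (hW1 : IsChan W1) (y2 : Y2) : ∑ y1, gY12 pX W1 W2 (y1, y2) = pY1m pX W2 y2 := by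
  simp only [gY12, pY1m]
  rw [Finset.sum_comm]
  simp only [← Finset.mul_sum, ← Finset.sum_mul, (hW1 _).2, mul_one]

lemma gY12_total (hpX : IsPmf pX) (hW1 : IsChan W1) (hW2 : IsChan W2) :
    ∑ z, gY12 pX W1 W2 z = 1 := by
  simp only [Fintype.sum_prod_type, gY12_sum1 _ _ _ hW2, pY1m_sum _ _ hpX hW1]

lemma prod_sum (p1 : U1 → ℝ) (p2 : U2 → ℝ) (h1 : ∑ u, p1 u = 1) (h2 : ∑ u, p2 u = 1) :
    ∑ z : U1 × U2, p1 z.1 * p2 z.2 = 1 := by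
  simp only [Fintype.sum_prod_type, ← Finset.mul_sum, h2, mul_one, h1]

lemma prod_ent (p1 : U1 → ℝ) (p2 : U2 → ℝ) (h1 : ∑ u, p1 u = 1) (h2 : ∑ u, p2 u = 1) :
    ent (fun z : U1 × U2 => p1 z.1 * p2 z.2) = ent p1 + ent p2 := by
  have : ∀ a, ∑ b, Real.negMulLog (p1 a * p2 b) = Real.negMulLog (p1 a) + p1 a * ent p2 :=
    fun a => nml_chan _ _ h2
  rw [ent, Fintype.sum_prod_type]
  simp only [this, Finset.sum_add_distrib, ← Finset.sum_mul, h1, one_mul]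
  rfl

lemma gY12U_total (p1 : Y1 → U1 → ℝ) (p2 : Y2 → U2 → ℝ) (h1 : IsChan p1) (h2 : IsChan p2)
    (hpX : IsPmf pX) (hW1 : IsChan W1) (hW2 : IsChan W2) :
    ∑ z, gY12U pX W1 W2 p1 p2 z = 1 := by
  rw [Fintype.sum_prod_type]
  simp only [gY12U, ← Finset.mul_sum, prod_sum _ _ (h1 _).2 (h2 _).2, mul_one,
    gY12_total _ _ _ hpX hW1 hW2]

lemma gY12U_ent (p1 : Y1 → U1 → ℝ) (p2 : Y2 → U2 → ℝ) (h1 : IsChan p1) (h2 : IsChan p2)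
    (hW1 : IsChan W1) (hW2 : IsChan W2) :
    ent (gY12U pX W1 W2 p1 p2) = ent (gY12 pX W1 W2) + hC pX W1 p1 + hC pX W2 p2 := by
  have h : ent (gY12U pX W1 W2 p1 p2) =
      ∑ z : Y1 × Y2, (Real.negMulLog (gY12 pX W1 W2 z) +
        gY12 pX W1 W2 z * (ent (p1 z.1) + ent (p2 z.2))) := by
    rw [ent, Fintype.sum_prod_type]
    refine Finset.sum_congr rfl fun z _ => ?_
    rw [← prod_ent _ _ (h1 _).2 (h2 _).2]
    exact nml_chan (gY12 pX W1 W2 z) (fun b : U1 × U2 => p1 z.1 b.1 * p2 z.2 b.2)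
      (prod_sum _ _ (h1 _).2 (h2 _).2)
  rw [h]
  simp only [mul_add, Finset.sum_add_distrib]
  have e1 : ∑ z : Y1 × Y2, gY12 pX W1 W2 z * ent (p1 z.1) = hC pX W1 p1 := by
    rw [Fintype.sum_prod_type]
    simp only [← Finset.sum_mul, gY12_sum1 _ _ _ hW2, hC]
  have e2 : ∑ z : Y1 × Y2, gY12 pX W1 W2 z * ent (p2 z.2) = hC pX W2 p2 := by
    rw [Fintype.sum_prod_type, Finset.sum_comm]
    simp only [← Finset.sum_mul, gY12_sum2 _ _ _ hW1, hC]
  rw [e1, e2, ← add_assoc]; rfl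

variable (pQ : Qt → ℝ) (c1 : Qt → Y1 → U1 → ℝ) (c2 : Qt → Y2 → U2 → ℝ)

/-- rotation equivalences -/
def rot2 {Q A B : Type} : Q × (A × B) ≃ A × B × Q :=
  ⟨fun z => (z.2.1, z.2.2, z.1), fun w => (w.2.2, (w.1, w.2.1)), fun _ => rfl, fun _ => rfl⟩

def rot3 {Q A B C : Type} : Q × (A × B × C) ≃ A × B × C × Q :=
  ⟨fun z => (z.2.1, z.2.2.1, z.2.2.2, z.1), fun w => (w.2.2.2, (w.1, w.2.1, w.2.2.1)),
    fun _ => rfl, fun _ => rfl⟩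

def rot4 {Q A B C D : Type} : Q × ((A × B) × C × D) ≃ A × B × C × D × Q :=
  ⟨fun z => (z.2.1.1, z.2.1.2, z.2.2.1, z.2.2.2, z.1),
    fun w => (w.2.2.2.2, ((w.1, w.2.1), w.2.2.1, w.2.2.2.1)),
    fun _ => rfl, fun _ => rfl⟩

lemma qU12_eq (u1 : U1) (u2 : U2) (q : Qt) :
    mqU12 (ceoJointQ pQ pX W1 W2 c1 c2) (u1, u2, q)
      = pQ q * mU12 (ceoJoint pX W1 W2 (c1 q) (c2 q)) (u1, u2) := by
  simp only [mqU12, ceoJointQ, mU12, mXU, ceoJoint, Finset.mul_sum, mul_assoc]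

lemma qent_U12 (hpX : IsPmf pX) (hW1 : IsChan W1) (hW2 : IsChan W2)
    (h1 : ∀ q, IsChan (c1 q)) (h2 : ∀ q, IsChan (c2 q)) :
    ent (mqU12 (ceoJointQ pQ pX W1 W2 c1 c2)) =
      ent pQ + ∑ q, pQ q * ent (mU12 (ceoJoint pX W1 W2 (c1 q) (c2 q))) := by
  refine entQ rot2 _ _ (fun q => ?_) _ (fun q a => qU12_eq _ _ _ _ _ _ _ _ _)
  rw [Fintype.sum_prod_type]
  exact mU12_sum _ _ _ _ _ hpX hW1 hW2 (h1 q) (h2 q)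

lemma qent_U1 (hpX : IsPmf pX) (hW1 : IsChan W1) (hW2 : IsChan W2)
    (h1 : ∀ q, IsChan (c1 q)) (h2 : ∀ q, IsChan (c2 q)) :
    ent (mqU1 (ceoJointQ pQ pX W1 W2 c1 c2)) =
      ent pQ + ∑ q, pQ q * ent (mU1 (ceoJoint pX W1 W2 (c1 q) (c2 q))) := by
  refine entQ (Equiv.prodComm _ _) _ _ (fun q => ?_) _ (fun q a => ?_)
  · exact mU12_sum _ _ _ _ _ hpX hW1 hW2 (h1 q) (h2 q)
  · simp only [Equiv.prodComm_apply, Prod.swap, mqU1, qU12_eq, mU1, Finset.mul_sum]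

lemma qent_U2 (hpX : IsPmf pX) (hW1 : IsChan W1) (hW2 : IsChan W2)
    (h1 : ∀ q, IsChan (c1 q)) (h2 : ∀ q, IsChan (c2 q)) :
    ent (mqU2 (ceoJointQ pQ pX W1 W2 c1 c2)) =
      ent pQ + ∑ q, pQ q * ent (mU2 (ceoJoint pX W1 W2 (c1 q) (c2 q))) := by
  refine entQ (Equiv.prodComm _ _) _ _ (fun q => ?_) _ (fun q a => ?_)
  · simp only [mU2]
    rw [Finset.sum_comm]
    exact mU12_sum _ _ _ _ _ hpX hW1 hW2 (h1 q) (h2 q)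
  · simp only [Equiv.prodComm_apply, Prod.swap, mqU2, qU12_eq, mU2, Finset.mul_sum]

lemma qent_XU12 (hpX : IsPmf pX) (hW1 : IsChan W1) (hW2 : IsChan W2)
    (h1 : ∀ q, IsChan (c1 q)) (h2 : ∀ q, IsChan (c2 q)) :
    ent (mqXU12 (ceoJointQ pQ pX W1 W2 c1 c2)) =
      ent pQ + ∑ q, pQ q * ent (mXU (ceoJoint pX W1 W2 (c1 q) (c2 q))) := by
  refine entQ rot3 _ _ (fun q => ?_) _ (fun q a => ?_)
  · simp only [Fintype.sum_prod_type, mXU_eq, ← Finset.mul_sum, pU1X_sum _ _ hW2 (h2 q),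
      pU1X_sum _ _ hW1 (h1 q), mul_one, hpX.2]
  · simp only [rot3, Equiv.coe_fn_mk, mqXU12, mXU, ceoJointQ, ceoJoint, Finset.mul_sum, mul_assoc]

lemma qent_Y1U12 (hpX : IsPmf pX) (hW1 : IsChan W1) (hW2 : IsChan W2)
    (h1 : ∀ q, IsChan (c1 q)) (h2 : ∀ q, IsChan (c2 q)) :
    ent (mqY1U12 (ceoJointQ pQ pX W1 W2 c1 c2)) =
      ent pQ + ∑ q, pQ q * ent (mY1U (ceoJoint pX W1 W2 (c1 q) (c2 q))) := by
  refine entQ rot3 _ _ (fun q => ?_) _ (fun q a => ?_)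
  · have : ∀ y1, ∑ u1, ∑ u2, mY1U (ceoJoint pX W1 W2 (c1 q) (c2 q)) (y1, u1, u2)
        = pY1m pX W1 y1 := fun y1 => by
      have : ∀ u1, ∑ u2, mY1U (ceoJoint pX W1 W2 (c1 q) (c2 q)) (y1, u1, u2) =
        pY1m pX W1 y1 * c1 q y1 u1 := fun u1 => mY1U1_eq _ _ _ _ _ hW2 (h2 q) y1 u1
      simp only [this, ← Finset.mul_sum, (h1 q y1).2, mul_one]
    simp only [Fintype.sum_prod_type, this, pY1m_sum _ _ hpX hW1]
  · simp only [rot3, Equiv.coe_fn_mk, mqY1U12, mY1U, ceoJointQ, ceoJoint, Finset.mul_sum,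
      mul_assoc]

lemma qent_Y1U2 (hpX : IsPmf pX) (hW1 : IsChan W1) (hW2 : IsChan W2)
    (h1 : ∀ q, IsChan (c1 q)) (h2 : ∀ q, IsChan (c2 q)) :
    ent (mqY1U2 (ceoJointQ pQ pX W1 W2 c1 c2)) =
      ent pQ + ∑ q, pQ q * ent (mY1U2 (ceoJoint pX W1 W2 (c1 q) (c2 q))) := by
  refine entQ rot2 _ _ (fun q => ?_) _ (fun q a => ?_)
  · have : ∀ y1, ∑ u2, mY1U2 (ceoJoint pX W1 W2 (c1 q) (c2 q)) (y1, u2)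
        = pY1m pX W1 y1 := fun y1 => mY1_eq _ _ _ _ _ hW2 (h1 q) (h2 q) y1
    simp only [Fintype.sum_prod_type, this, pY1m_sum _ _ hpX hW1]
  · simp only [rot2, Equiv.coe_fn_mk, mqY1U2, mY1U2, mY1U, ceoJointQ, ceoJoint, Finset.mul_sum,
      mul_assoc]
    rw [Finset.sum_comm (s := (Finset.univ : Finset U1))]
    exact Finset.sum_congr rfl fun x _ => Finset.sum_comm

lemma qent_Y2U12 (hpX : IsPmf pX) (hW1 : IsChan W1) (hW2 : IsChan W2)
    (h1 : ∀ q, IsChan (c1 q)) (h2 : ∀ q, IsChan (c2 q)) :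
    ent (mqY2U12 (ceoJointQ pQ pX W1 W2 c1 c2)) =
      ent pQ + ∑ q, pQ q * ent (mY2U (ceoJoint pX W1 W2 (c1 q) (c2 q))) := by
  refine entQ rot3 _ _ (fun q => ?_) _ (fun q a => ?_)
  · have : ∀ y2, ∑ u1, ∑ u2, mY2U (ceoJoint pX W1 W2 (c1 q) (c2 q)) (y2, u1, u2)
        = pY1m pX W2 y2 := fun y2 => by
      simp only [mY2U_eq, ← Finset.mul_sum, (h2 q y2).2, mul_one]
      rw [Finset.sum_comm]
      simp only [← Finset.mul_sum, pU1X_sum _ _ hW1 (h1 q), mul_one, pY1m]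
    simp only [Fintype.sum_prod_type, this, pY1m_sum _ _ hpX hW2]
  · simp only [rot3, Equiv.coe_fn_mk, mqY2U12, mY2U, ceoJointQ, ceoJoint, Finset.mul_sum,
      mul_assoc]

lemma qent_Y2U1 (hpX : IsPmf pX) (hW1 : IsChan W1) (hW2 : IsChan W2)
    (h1 : ∀ q, IsChan (c1 q)) (h2 : ∀ q, IsChan (c2 q)) :
    ent (mqY2U1 (ceoJointQ pQ pX W1 W2 c1 c2)) =
      ent pQ + ∑ q, pQ q * ent (mY2U1 (ceoJoint pX W1 W2 (c1 q) (c2 q))) := by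
  refine entQ rot2 _ _ (fun q => ?_) _ (fun q a => ?_)
  · have : ∀ y2, ∑ u1, mY2U1 (ceoJoint pX W1 W2 (c1 q) (c2 q)) (y2, u1)
        = pY1m pX W2 y2 := fun y2 => by
      simp only [mY2U1_eq _ _ _ _ _ (h2 q)]
      rw [Finset.sum_comm]
      simp only [← Finset.mul_sum, pU1X_sum _ _ hW1 (h1 q), mul_one, pY1m]
    simp only [Fintype.sum_prod_type, this, pY1m_sum _ _ hpX hW2]
  · simp only [rot2, Equiv.coe_fn_mk, mqY2U1, mY2U1, mY2U, ceoJointQ, ceoJoint, Finset.mul_sum,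
      mul_assoc]
    rw [Finset.sum_comm (s := (Finset.univ : Finset U2))]
    exact Finset.sum_congr rfl fun x _ => Finset.sum_comm

lemma qY12_eq (h1 : ∀ q, IsChan (c1 q)) (h2 : ∀ q, IsChan (c2 q)) (y1 : Y1) (y2 : Y2) (q : Qt) :
    mqY12 (ceoJointQ pQ pX W1 W2 c1 c2) (y1, y2, q) = pQ q * gY12 pX W1 W2 (y1, y2) := by
  simp only [mqY12, ceoJointQ, gY12, ← Finset.mul_sum, (h2 _ _).2, (h1 _ _).2, mul_one, mul_assoc]

lemma qent_Y12 (hpX : IsPmf pX) (hW1 : IsChan W1) (hW2 : IsChan W2)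
    (h1 : ∀ q, IsChan (c1 q)) (h2 : ∀ q, IsChan (c2 q)) :
    ent (mqY12 (ceoJointQ pQ pX W1 W2 c1 c2)) =
      ent pQ + ∑ q, pQ q * ent (gY12 pX W1 W2) :=
  entQ rot2 _ (fun _ => gY12 pX W1 W2) (fun _ => gY12_total _ _ _ hpX hW1 hW2) _
    (fun q a => qY12_eq _ _ _ _ _ _ h1 h2 _ _ _)

lemma qent_Q (hpX : IsPmf pX) (hW1 : IsChan W1) (hW2 : IsChan W2)
    (h1 : ∀ q, IsChan (c1 q)) (h2 : ∀ q, IsChan (c2 q)) :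
    ent (mqQ (ceoJointQ pQ pX W1 W2 c1 c2)) = ent pQ := by
  congr 1
  funext q
  simp only [mqQ, qY12_eq _ _ _ _ _ _ h1 h2, ← Finset.mul_sum, gY12_sum1 _ _ _ hW2,
    pY1m_sum _ _ hpX hW1, mul_one]

lemma qent_Y12U12 (hpX : IsPmf pX) (hW1 : IsChan W1) (hW2 : IsChan W2)
    (h1 : ∀ q, IsChan (c1 q)) (h2 : ∀ q, IsChan (c2 q)) :
    ent (mqY12U12 (ceoJointQ pQ pX W1 W2 c1 c2)) =
      ent pQ + ∑ q, pQ q * ent (gY12U pX W1 W2 (c1 q) (c2 q)) := by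
  refine entQ rot4 _ _ (fun q => gY12U_total _ _ _ _ _ (h1 q) (h2 q) hpX hW1 hW2) _
    (fun q a => ?_)
  simp only [rot4, Equiv.coe_fn_mk, mqY12U12, gY12U, gY12, ceoJointQ, Finset.mul_sum,
    Finset.sum_mul, mul_assoc]

lemma IQ1_eq (hpX : IsPmf pX) (hW1 : IsChan W1) (hW2 : IsChan W2)
    (h1 : ∀ q, IsChan (c1 q)) (h2 : ∀ q, IsChan (c2 q)) :
    IQ1 (ceoJointQ pQ pX W1 W2 c1 c2) =
      ∑ q, pQ q * I1c (ceoJoint pX W1 W2 (c1 q) (c2 q)) := by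
  simp only [IQ1, I1c, qent_Y1U2 _ _ _ _ _ _ hpX hW1 hW2 h1 h2,
    qent_U12 _ _ _ _ _ _ hpX hW1 hW2 h1 h2, qent_U2 _ _ _ _ _ _ hpX hW1 hW2 h1 h2,
    qent_Y1U12 _ _ _ _ _ _ hpX hW1 hW2 h1 h2, mul_add, mul_sub, Finset.sum_add_distrib,
    Finset.sum_sub_distrib]
  ring

lemma IQ2_eq (hpX : IsPmf pX) (hW1 : IsChan W1) (hW2 : IsChan W2)
    (h1 : ∀ q, IsChan (c1 q)) (h2 : ∀ q, IsChan (c2 q)) :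
    IQ2 (ceoJointQ pQ pX W1 W2 c1 c2) =
      ∑ q, pQ q * I2c (ceoJoint pX W1 W2 (c1 q) (c2 q)) := by
  simp only [IQ2, I2c, qent_Y2U1 _ _ _ _ _ _ hpX hW1 hW2 h1 h2,
    qent_U12 _ _ _ _ _ _ hpX hW1 hW2 h1 h2, qent_U1 _ _ _ _ _ _ hpX hW1 hW2 h1 h2,
    qent_Y2U12 _ _ _ _ _ _ hpX hW1 hW2 h1 h2, mul_add, mul_sub, Finset.sum_add_distrib,
    Finset.sum_sub_distrib]
  ring

lemma HXQ_eq (hpX : IsPmf pX) (hW1 : IsChan W1) (hW2 : IsChan W2)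
    (h1 : ∀ q, IsChan (c1 q)) (h2 : ∀ q, IsChan (c2 q)) :
    HXQ (ceoJointQ pQ pX W1 W2 c1 c2) =
      ∑ q, pQ q * condHX (ceoJoint pX W1 W2 (c1 q) (c2 q)) := by
  simp only [HXQ, condHX, qent_XU12 _ _ _ _ _ _ hpX hW1 hW2 h1 h2,
    qent_U12 _ _ _ _ _ _ hpX hW1 hW2 h1 h2, mul_sub, Finset.sum_sub_distrib]
  ring

lemma IQsum_eq (hpX : IsPmf pX) (hW1 : IsChan W1) (hW2 : IsChan W2)
    (h1 : ∀ q, IsChan (c1 q)) (h2 : ∀ q, IsChan (c2 q)) :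
    IQsum (ceoJointQ pQ pX W1 W2 c1 c2) =
      ∑ q, pQ q * (I1c (ceoJoint pX W1 W2 (c1 q) (c2 q)) +
        I2m (ceoJoint pX W1 W2 (c1 q) (c2 q))) := by
  simp only [IQsum, I1c_eq _ _ _ _ _ hW2 (h1 _) (h2 _), I2m_eq _ _ _ _ _ hW1 (h1 _) (h2 _),
    qent_Y12 _ _ _ _ _ _ hpX hW1 hW2 h1 h2,
    qent_U12 _ _ _ _ _ _ hpX hW1 hW2 h1 h2, qent_Q _ _ _ _ _ _ hpX hW1 hW2 h1 h2,
    qent_Y12U12 _ _ _ _ _ _ hpX hW1 hW2 h1 h2, gY12U_ent _ _ _ _ _ (h1 _) (h2 _) hW1 hW2,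
    mul_add, mul_sub, Finset.sum_add_distrib, Finset.sum_sub_distrib]
  ring

lemma Isum_comm (p1 : Y1 → U1 → ℝ) (p2 : Y2 → U2 → ℝ) (hW1 : IsChan W1) (hW2 : IsChan W2)
    (h1 : IsChan p1) (h2 : IsChan p2) :
    I1c (ceoJoint pX W1 W2 p1 p2) + I2m (ceoJoint pX W1 W2 p1 p2) =
    I1m (ceoJoint pX W1 W2 p1 p2) + I2c (ceoJoint pX W1 W2 p1 p2) := by
  rw [I1c_eq _ _ _ _ _ hW2 h1 h2, I2m_eq _ _ _ _ _ hW1 h1 h2, I1m_eq _ _ _ _ _ hW2 h1 h2,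
    I2c_eq _ _ _ _ _ hW1 h1 h2]
  ring

end

section
variable (pX : X → ℝ) (W1 : X → Y1 → ℝ) (W2 : X → Y2 → ℝ)

lemma isCompact_chan (α β : Type) [Fintype α] [Fintype β] :
    IsCompact {w : α → β → ℝ | IsChan w} := by
  have : {w : α → β → ℝ | IsChan w} = Set.pi Set.univ (fun _ => stdSimplex ℝ β) := by
    ext w; simp [IsChan, IsPmf, stdSimplex, Set.mem_pi]
  rw [this]
  exact isCompact_univ_pi fun _ => isCompact_stdSimplex ℝ β

lemma continuous_ent {Z α : Type} [TopologicalSpace Z] [Fintype α] {f : Z → α → ℝ}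
    (hf : ∀ a, Continuous fun z => f z a) : Continuous fun z => ent (f z) :=
  continuous_finsetSum _ fun a _ => Real.continuous_negMulLog.comp (hf a)

lemma cont_joint (z : X × Y1 × Y2 × U1 × U2) :
    Continuous fun P : (Y1 → U1 → ℝ) × (Y2 → U2 → ℝ) => ceoJoint pX W1 W2 P.1 P.2 z := by
  unfold ceoJoint; fun_prop

lemma cont_condHX : Continuous fun P : (Y1 → U1 → ℝ) × (Y2 → U2 → ℝ) =>
    condHX (ceoJoint pX W1 W2 P.1 P.2) := by
  have := cont_joint (U1 := U1) (U2 := U2) pX W1 W2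
  unfold condHX
  refine Continuous.sub ?_ ?_ <;> refine continuous_ent fun a => ?_ <;>
    simp only [mU12, mXU] <;> fun_prop

lemma cont_I1c : Continuous fun P : (Y1 → U1 → ℝ) × (Y2 → U2 → ℝ) =>
    I1c (ceoJoint pX W1 W2 P.1 P.2) := by
  have := cont_joint (U1 := U1) (U2 := U2) pX W1 W2
  unfold I1c
  refine Continuous.sub (Continuous.sub (Continuous.add ?_ ?_) ?_) ?_ <;>
    refine continuous_ent fun a => ?_ <;>
    simp only [mU12, mXU, mY1U2, mY1U, mU2] <;> fun_prop

lemma cont_I2c : Continuous fun P : (Y1 → U1 → ℝ) × (Y2 → U2 → ℝ) =>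
    I2c (ceoJoint pX W1 W2 P.1 P.2) := by
  have := cont_joint (U1 := U1) (U2 := U2) pX W1 W2
  unfold I2c
  refine Continuous.sub (Continuous.sub (Continuous.add ?_ ?_) ?_) ?_ <;>
    refine continuous_ent fun a => ?_ <;>
    simp only [mU12, mXU, mY2U1, mY2U, mU1] <;> fun_prop

lemma cont_I1m : Continuous fun P : (Y1 → U1 → ℝ) × (Y2 → U2 → ℝ) =>
    I1m (ceoJoint pX W1 W2 P.1 P.2) := by
  have := cont_joint (U1 := U1) (U2 := U2) pX W1 W2
  unfold I1m
  refine Continuous.sub (Continuous.add ?_ ?_) ?_ <;>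
    refine continuous_ent fun a => ?_ <;>
    simp only [mU12, mXU, mY1, mY1U2, mY1U, mU1, mY1U1] <;> fun_prop

lemma cont_I2m : Continuous fun P : (Y1 → U1 → ℝ) × (Y2 → U2 → ℝ) =>
    I2m (ceoJoint pX W1 W2 P.1 P.2) := by
  have := cont_joint (U1 := U1) (U2 := U2) pX W1 W2
  unfold I2m
  refine Continuous.sub (Continuous.add ?_ ?_) ?_ <;>
    refine continuous_ent fun a => ?_ <;>
    simp only [mU12, mXU, mY2, mY2U2, mU2] <;> fun_prop

/-- The compact set of distortions achievable under two continuous constraints. -/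
lemma isCompact_dset (f g : (Y1 → U1 → ℝ) × (Y2 → U2 → ℝ) → ℝ) (hf : Continuous f)
    (hg : Continuous g) (a b : ℝ) :
    IsCompact {d : ℝ | ∃ p1 : Y1 → U1 → ℝ, ∃ p2 : Y2 → U2 → ℝ, IsChan p1 ∧ IsChan p2 ∧
      f (p1, p2) ≤ a ∧ g (p1, p2) ≤ b ∧ d = condHX (ceoJoint pX W1 W2 p1 p2)} := by
  have h : IsCompact (({w : Y1 → U1 → ℝ | IsChan w} ×ˢ {w : Y2 → U2 → ℝ | IsChan w}) ∩
      ({P | f P ≤ a} ∩ {P | g P ≤ b})) :=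
    ((isCompact_chan Y1 U1).prod (isCompact_chan Y2 U2)).inter_right
      ((isClosed_le hf continuous_const).inter (isClosed_le hg continuous_const))
  convert h.image (cont_condHX pX W1 W2) using 1
  ext d
  constructor
  · rintro ⟨p1, p2, h1, h2, h3, h4, rfl⟩
    exact ⟨(p1, p2), ⟨⟨h1, h2⟩, h3, h4⟩, rfl⟩
  · rintro ⟨⟨p1, p2⟩, ⟨⟨h1, h2⟩, h3, h4⟩, rfl⟩
    exact ⟨p1, p2, h1, h2, h3, h4, rfl⟩

/-- A constant test channel. -/
lemma exists_constChan [Nonempty U1] (Y : Type) [Fintype Y] : ∃ p : Y → U1 → ℝ, IsChan p ∧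
    ∀ (pX : X → ℝ) (W : X → Y → ℝ), IsPmf pX → IsChan W →
      hC pX W p = 0 ∧ ent (fun u => ∑ x, pX x * pU1X W p x u) = 0 := by
  classical
  obtain ⟨u0⟩ := ‹Nonempty U1›
  have he : ent (fun u : U1 => if u = u0 then (1 : ℝ) else 0) = 0 := by
    refine Finset.sum_eq_zero fun u _ => ?_
    dsimp only
    split_ifs <;> simp
  refine ⟨fun _ u => if u = u0 then 1 else 0, fun y => ⟨fun u => ?_, by simp⟩,
    fun pX W hp hW => ⟨?_, ?_⟩⟩
  · dsimp only; split_ifs <;> norm_num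
  · simp only [hC, he, mul_zero, Finset.sum_const_zero]
  · refine Eq.trans ?_ he
    congr 1
    funext u
    simp only [pU1X, ← Finset.sum_mul, (hW _).2, one_mul, hp.2]

lemma exists_zero [Nonempty U1] [Nonempty U2]
    (hpX : IsPmf pX) (hW1 : IsChan W1) (hW2 : IsChan W2) :
    ∃ p1 : Y1 → U1 → ℝ, ∃ p2 : Y2 → U2 → ℝ, IsChan p1 ∧ IsChan p2 ∧
      I1m (ceoJoint pX W1 W2 p1 p2) = 0 ∧ I2m (ceoJoint pX W1 W2 p1 p2) = 0 := by
  obtain ⟨p1, h1, e1⟩ := exists_constChan (X := X) (U1 := U1) Y1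
  obtain ⟨p2, h2, e2⟩ := exists_constChan (X := X) (U1 := U2) Y2
  refine ⟨p1, p2, h1, h2, ?_, ?_⟩
  · rw [I1m_eq _ _ _ _ _ hW2 h1 h2, (e1 pX W1 hpX hW1).1, sub_zero]
    refine Eq.trans ?_ (e1 pX W1 hpX hW1).2
    congr 1; funext u; exact mU1_eq _ _ _ _ _ hW2 h2 u
  · rw [I2m_eq _ _ _ _ _ hW1 h1 h2, (e2 pX W2 hpX hW2).1, sub_zero]
    refine Eq.trans ?_ (e2 pX W2 hpX hW2).2
    congr 1; funext u; exact mU2_eq _ _ _ _ _ hW1 h1 u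

lemma mem1_iff [Nonempty U1] [Nonempty U2]
    (hpX : IsPmf pX) (hW1 : IsChan W1) (hW2 : IsChan W2) (a b d : ℝ) :
    (0 ≤ a ∧ 0 ≤ b ∧ Dceo1 U1 U2 pX W1 W2 a b ≤ d) ↔
    ∃ p1 : Y1 → U1 → ℝ, ∃ p2 : Y2 → U2 → ℝ, IsChan p1 ∧ IsChan p2 ∧
      I1c (ceoJoint pX W1 W2 p1 p2) ≤ a ∧ I2m (ceoJoint pX W1 W2 p1 p2) ≤ b ∧
      condHX (ceoJoint pX W1 W2 p1 p2) ≤ d := by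
  have hc := isCompact_dset pX W1 W2 _ _ (cont_I1c (U1 := U1) (U2 := U2) pX W1 W2)
    (cont_I2m pX W1 W2) a b
  constructor
  · rintro ⟨ha, hb, hd⟩
    obtain ⟨p1, p2, h1, h2, z1, z2⟩ := exists_zero (U1 := U1) (U2 := U2) pX W1 W2 hpX hW1 hW2
    have hne : _ := hc.sInf_mem ⟨_, p1, p2, h1, h2,
      ((I1c_le _ _ _ _ _ hpX hW1 hW2 h1 h2).trans (z1.le.trans ha)), z2.le.trans hb, rfl⟩
    obtain ⟨q1, q2, k1, k2, k3, k4, k5⟩ := hne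
    exact ⟨q1, q2, k1, k2, k3, k4, k5 ▸ hd⟩
  · rintro ⟨p1, p2, h1, h2, h3, h4, h5⟩
    exact ⟨(I1c_nonneg _ _ _ _ _ hpX hW1 hW2 h1 h2).trans h3,
      ((I2c_nonneg _ _ _ _ _ hpX hW1 hW2 h1 h2).trans
        (I2c_le _ _ _ _ _ hpX hW1 hW2 h1 h2)).trans h4,
      (csInf_le hc.bddBelow ⟨p1, p2, h1, h2, h3, h4, rfl⟩).trans h5⟩

lemma mem2_iff [Nonempty U1] [Nonempty U2]
    (hpX : IsPmf pX) (hW1 : IsChan W1) (hW2 : IsChan W2) (a b d : ℝ) :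
    (0 ≤ a ∧ 0 ≤ b ∧ Dceo2 U1 U2 pX W1 W2 a b ≤ d) ↔
    ∃ p1 : Y1 → U1 → ℝ, ∃ p2 : Y2 → U2 → ℝ, IsChan p1 ∧ IsChan p2 ∧
      I1m (ceoJoint pX W1 W2 p1 p2) ≤ a ∧ I2c (ceoJoint pX W1 W2 p1 p2) ≤ b ∧
      condHX (ceoJoint pX W1 W2 p1 p2) ≤ d := by
  have hc := isCompact_dset pX W1 W2 _ _ (cont_I2c (U1 := U1) (U2 := U2) pX W1 W2)
    (cont_I1m pX W1 W2) b a
  constructor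
  · rintro ⟨ha, hb, hd⟩
    obtain ⟨p1, p2, h1, h2, z1, z2⟩ := exists_zero (U1 := U1) (U2 := U2) pX W1 W2 hpX hW1 hW2
    have hne : _ := hc.sInf_mem ⟨_, p1, p2, h1, h2,
      ((I2c_le _ _ _ _ _ hpX hW1 hW2 h1 h2).trans (z2.le.trans hb)), z1.le.trans ha, rfl⟩
    obtain ⟨q1, q2, k1, k2, k3, k4, k5⟩ := hne
    exact ⟨q1, q2, k1, k2, k4, k3, k5 ▸ hd⟩
  · rintro ⟨p1, p2, h1, h2, h3, h4, h5⟩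
    exact ⟨((I1c_nonneg _ _ _ _ _ hpX hW1 hW2 h1 h2).trans
        (I1c_le _ _ _ _ _ hpX hW1 hW2 h1 h2)).trans h3,
      (I2c_nonneg _ _ _ _ _ hpX hW1 hW2 h1 h2).trans h4,
      (csInf_le hc.bddBelow ⟨p1, p2, h1, h2, h4, h3, rfl⟩).trans h5⟩

end
/-- **Proposition 1** (CEO region decomposition): `RD_CEO = conv(RD¹_CEO ∪ RD²_CEO)`.
Here the auxiliary alphabets are `𝒰₁ = 𝒴₁` and `𝒰₂ = 𝒴₂` (so that `|𝒰ᵢ| = |𝒴ᵢ|`),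
and the time-sharing alphabet is `Fin m` with `m ≤ 4`. -/
theorem ceo_region_decomposition
    (pX : X → ℝ) (W1 : X → Y1 → ℝ) (W2 : X → Y2 → ℝ)
    (hpX : IsPmf pX) (hW1 : IsChan W1) (hW2 : IsChan W2) :
    {r : ℝ × ℝ × ℝ | ∃ m : ℕ, m ≤ 4 ∧
      ∃ pQ : Fin m → ℝ, ∃ c1 : Fin m → Y1 → Y1 → ℝ, ∃ c2 : Fin m → Y2 → Y2 → ℝ,
        IsPmf pQ ∧ (∀ q, IsChan (c1 q)) ∧ (∀ q, IsChan (c2 q)) ∧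
        IQ1 (ceoJointQ pQ pX W1 W2 c1 c2) ≤ r.1 ∧
        IQ2 (ceoJointQ pQ pX W1 W2 c1 c2) ≤ r.2.1 ∧
        IQsum (ceoJointQ pQ pX W1 W2 c1 c2) ≤ r.1 + r.2.1 ∧
        HXQ (ceoJointQ pQ pX W1 W2 c1 c2) ≤ r.2.2}
    = convexHull ℝ
      ({r : ℝ × ℝ × ℝ | 0 ≤ r.1 ∧ 0 ≤ r.2.1 ∧ Dceo1 Y1 Y2 pX W1 W2 r.1 r.2.1 ≤ r.2.2}
        ∪ {r : ℝ × ℝ × ℝ | 0 ≤ r.1 ∧ 0 ≤ r.2.1 ∧ Dceo2 Y1 Y2 pX W1 W2 r.1 r.2.1 ≤ r.2.2}) := by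
  obtain ⟨x0⟩ : Nonempty X := by
    by_contra h
    rw [not_nonempty_iff] at h
    have := hpX.2
    simp at this
  have ne1 : Nonempty Y1 := by
    by_contra h
    rw [not_nonempty_iff] at h
    have := (hW1 x0).2
    simp at this
  have ne2 : Nonempty Y2 := by
    by_contra h
    rw [not_nonempty_iff] at h
    have := (hW2 x0).2
    simp at this
  simp only [mem1_iff pX W1 W2 hpX hW1 hW2, mem2_iff pX W1 W2 hpX hW1 hW2]
  set J : (Y1 → Y1 → ℝ) → (Y2 → Y2 → ℝ) → X × Y1 × Y2 × Y1 × Y2 → ℝ :=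
    fun p1 p2 => ceoJoint pX W1 W2 p1 p2 with hJ
  set S : Set (ℝ × ℝ × ℝ) := _ ∪ _ with hS
  have up : ∀ v : ℝ × ℝ × ℝ, 0 ≤ v.1 → 0 ≤ v.2.1 → 0 ≤ v.2.2 → ∀ r ∈ convexHull ℝ S,
      r + v ∈ convexHull ℝ S := by
    intro v v1 v2 v3 r hr
    have hc : Convex ℝ ((fun z => z + v) ⁻¹' convexHull ℝ S) :=
      (convex_convexHull ℝ S).translate_preimage_left v
    refine convexHull_min (fun z hz => ?_) hc hr
    refine subset_convexHull ℝ S ?_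
    rcases hz with ⟨p1, p2, h1, h2, h3, h4, h5⟩ | ⟨p1, p2, h1, h2, h3, h4, h5⟩
    · exact Or.inl ⟨p1, p2, h1, h2, h3.trans (le_add_of_nonneg_right v1),
        h4.trans (le_add_of_nonneg_right v2), h5.trans (le_add_of_nonneg_right v3)⟩
    · exact Or.inr ⟨p1, p2, h1, h2, h3.trans (le_add_of_nonneg_right v1),
        h4.trans (le_add_of_nonneg_right v2), h5.trans (le_add_of_nonneg_right v3)⟩
  ext ⟨R1, R2, D⟩
  constructor
  · rintro ⟨m, -, pQ, c1, c2, hQ, h1, h2, k1, k2, k3, k4⟩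
    rw [IQ1_eq _ _ _ _ _ _ hpX hW1 hW2 h1 h2] at k1
    rw [IQ2_eq _ _ _ _ _ _ hpX hW1 hW2 h1 h2] at k2
    rw [IQsum_eq _ _ _ _ _ _ hpX hW1 hW2 h1 h2] at k3
    rw [HXQ_eq _ _ _ _ _ _ hpX hW1 hW2 h1 h2] at k4
    dsimp only at k1 k2 k3 k4
    have k3' : ∑ q, pQ q * (I1m (J (c1 q) (c2 q)) + I2c (J (c1 q) (c2 q))) ≤ R1 + R2 := by
      simpa only [Isum_comm _ _ _ _ _ hW1 hW2 (h1 _) (h2 _)] using k3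
    set a := ∑ q, pQ q * I1c (J (c1 q) (c2 q)) with ha
    set b := ∑ q, pQ q * I2m (J (c1 q) (c2 q)) with hb
    set a' := ∑ q, pQ q * I1m (J (c1 q) (c2 q)) with ha'
    set b' := ∑ q, pQ q * I2c (J (c1 q) (c2 q)) with hb'
    set d := ∑ q, pQ q * condHX (J (c1 q) (c2 q)) with hd
    have hs : a + b = a' + b' := by
      simp only [ha, hb, ha', hb', ← Finset.sum_add_distrib, ← mul_add]
      exact Finset.sum_congr rfl fun q _ => by
        rw [hJ]; dsimp only; rw [Isum_comm _ _ _ _ _ hW1 hW2 (h1 _) (h2 _)]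
    have hsum : a + b ≤ R1 + R2 := by
      simpa only [ha, hb, ← Finset.sum_add_distrib, ← mul_add] using k3
    have hA : ((a, b, d) : ℝ × ℝ × ℝ) ∈ convexHull ℝ S := by
      have := (convex_convexHull ℝ S).sum_mem (t := Finset.univ) (w := pQ)
        (z := fun q => ((I1c (J (c1 q) (c2 q)), I2m (J (c1 q) (c2 q)),
          condHX (J (c1 q) (c2 q))) : ℝ × ℝ × ℝ)) (fun q _ => hQ.1 q) hQ.2
        (fun q _ => subset_convexHull ℝ S
          (Or.inl ⟨c1 q, c2 q, h1 q, h2 q, le_rfl, le_rfl, le_rfl⟩))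
      convert this using 1
      simp [Prod.ext_iff, Prod.fst_sum, Prod.snd_sum, ha, hb, hd]
    have hB : ((a', b', d) : ℝ × ℝ × ℝ) ∈ convexHull ℝ S := by
      have := (convex_convexHull ℝ S).sum_mem (t := Finset.univ) (w := pQ)
        (z := fun q => ((I1m (J (c1 q) (c2 q)), I2c (J (c1 q) (c2 q)),
          condHX (J (c1 q) (c2 q))) : ℝ × ℝ × ℝ)) (fun q _ => hQ.1 q) hQ.2
        (fun q _ => subset_convexHull ℝ S
          (Or.inr ⟨c1 q, c2 q, h1 q, h2 q, le_rfl, le_rfl, le_rfl⟩))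
      convert this using 1
      simp [Prod.ext_iff, Prod.fst_sum, Prod.snd_sum, ha', hb', hd]
    have dom : ∀ e f g : ℝ, (e, f, g) ∈ convexHull ℝ S → e ≤ R1 → f ≤ R2 → g ≤ D →
        (R1, R2, D) ∈ convexHull ℝ S := by
      intro e f g h e1 f1 g1
      have := up (R1 - e, R2 - f, D - g) (by simpa using e1) (by simpa using f1)
        (by simpa using g1) _ h
      simpa using this
    by_cases hc : a' ≤ R1
    · exact dom _ _ _ hB hc k2 k4
    · push Not at hc
      have hpos : 0 < a' - a := by linarith
      have hmem := (convex_convexHull ℝ S) hA hB (a := (a' - R1) / (a' - a))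
        (b := (R1 - a) / (a' - a)) (div_nonneg (by linarith) hpos.le)
        (div_nonneg (by linarith) hpos.le) (by field_simp; ring)
      simp only [Prod.smul_mk, smul_eq_mul, Prod.mk_add_mk] at hmem
      refine dom _ _ _ hmem (le_of_eq ?_) ?_ (le_of_eq_of_le ?_ k4)
      · field_simp; ring
      · have : (a' - R1) / (a' - a) * b + (R1 - a) / (a' - a) * b' = a + b - R1 := by
          have : b' = a + b - a' := by linarith
          rw [this]; field_simp; ring
        rw [this]; linarith
      · field_simp; ring
  · intro hr
    obtain ⟨ι, _, z, w, hz, hind, hw, hw1, hwz⟩ := eq_pos_convex_span_of_mem_convexHull hr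
    have hcard : Fintype.card ι ≤ 4 := by
      refine hind.card_le_finrank_succ.trans ?_
      have := Submodule.finrank_le (vectorSpan ℝ (Set.range z))
      have h3 : Module.finrank ℝ (ℝ × ℝ × ℝ) = 3 := by simp
      omega
    have hz' : ∀ i, ∃ P : (Y1 → Y1 → ℝ) × (Y2 → Y2 → ℝ), IsChan P.1 ∧ IsChan P.2 ∧
        I1c (J P.1 P.2) ≤ (z i).1 ∧ I2c (J P.1 P.2) ≤ (z i).2.1 ∧
        I1c (J P.1 P.2) + I2m (J P.1 P.2) ≤ (z i).1 + (z i).2.1 ∧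
        condHX (J P.1 P.2) ≤ (z i).2.2 := by
      intro i
      rcases hz ⟨i, rfl⟩ with ⟨p1, p2, h1, h2, h3, h4, h5⟩ | ⟨p1, p2, h1, h2, h3, h4, h5⟩
      · exact ⟨(p1, p2), h1, h2, h3, (I2c_le _ _ _ _ _ hpX hW1 hW2 h1 h2).trans h4,
          add_le_add h3 h4, h5⟩
      · exact ⟨(p1, p2), h1, h2, (I1c_le _ _ _ _ _ hpX hW1 hW2 h1 h2).trans h3, h4,
          (Isum_comm _ _ _ _ _ hW1 hW2 h1 h2).le.trans (add_le_add h3 h4), h5⟩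
    choose P P1 P2 P3 P4 P5 P6 using hz'
    let e := (Fintype.equivFin ι).symm
    have tr : ∀ f : ι → ℝ, ∑ q, w (e q) * f (e q) = ∑ i, w i * f i :=
      fun f => e.sum_comp (fun i => w i * f i)
    have r1 : ∑ i, w i * (z i).1 = R1 := by
      have := congrArg Prod.fst hwz
      simpa [Prod.fst_sum] using this
    have r2 : ∑ i, w i * (z i).2.1 = R2 := by
      have := congrArg (fun t : ℝ × ℝ × ℝ => t.2.1) hwz
      simpa [Prod.fst_sum, Prod.snd_sum] using this
    have r3 : ∑ i, w i * (z i).2.2 = D := by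
      have := congrArg (fun t : ℝ × ℝ × ℝ => t.2.2) hwz
      simpa [Prod.fst_sum, Prod.snd_sum] using this
    have mono : ∀ f g : ι → ℝ, (∀ i, f i ≤ g i) → ∑ i, w i * f i ≤ ∑ i, w i * g i :=
      fun f g h => Finset.sum_le_sum fun i _ => mul_le_mul_of_nonneg_left (h i) (hw i).le
    have g1 : ∀ q, IsChan ((P (e q)).1) := fun q => P1 (e q)
    have g2 : ∀ q, IsChan ((P (e q)).2) := fun q => P2 (e q)
    refine ⟨Fintype.card ι, hcard, fun q => w (e q), fun q => (P (e q)).1,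
      fun q => (P (e q)).2, ⟨fun q => (hw _).le, (e.sum_comp w).trans hw1⟩, g1, g2,
      ?_, ?_, ?_, ?_⟩
    · rw [IQ1_eq _ _ _ _ _ _ hpX hW1 hW2 g1 g2]
      refine (tr fun i => I1c (J (P i).1 (P i).2)).le.trans ?_
      exact (mono _ _ P3).trans r1.le
    · rw [IQ2_eq _ _ _ _ _ _ hpX hW1 hW2 g1 g2]
      refine (tr fun i => I2c (J (P i).1 (P i).2)).le.trans ?_
      exact (mono _ _ P4).trans r2.le
    · rw [IQsum_eq _ _ _ _ _ _ hpX hW1 hW2 g1 g2]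
      refine (tr fun i => I1c (J (P i).1 (P i).2) + I2m (J (P i).1 (P i).2)).le.trans ?_
      refine (mono _ _ P5).trans (le_of_eq ?_)
      simp only [mul_add, Finset.sum_add_distrib, r1, r2]
    · rw [HXQ_eq _ _ _ _ _ _ hpX hW1 hW2 g1 g2]
      refine (tr fun i => condHX (J (P i).1 (P i).2)).le.trans ?_
      exact (mono _ _ P6).trans r3.le
end
end

section
/- (Proposition 4, Berger–Tung region decomposition.) The rate-distortion region RD_BT equals the convex hull of the union of the two regions RD¹_BT and RD²_BT, i.e., RD_BT = conv(RD¹_BT ∪ RD²_BT) as subsets of ℝ⁴. -/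
open Finset Real

noncomputable section

variable {Y1 Y2 U1 U2 : Type} [Fintype Y1] [Fintype Y2] [Fintype U1] [Fintype U2]

/-- The joint pmf `p(y₁,y₂,u₁,u₂) = p(y₁,y₂)p(u₁|y₁)p(u₂|y₂)` induced by the source `pY`
and a test-channel pair `(p1, p2)`. -/
def btJoint (pY : Y1 × Y2 → ℝ) (p1 : Y1 → U1 → ℝ) (p2 : Y2 → U2 → ℝ) :
    Y1 × Y2 × U1 × U2 → ℝ :=
  fun z => pY (z.1, z.2.1) * p1 z.1 z.2.2.1 * p2 z.2.1 z.2.2.2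

/-- Marginal `p(y₁,u₁,u₂)`. -/
def bY1U (j : Y1 × Y2 × U1 × U2 → ℝ) : Y1 × U1 × U2 → ℝ :=
  fun z => ∑ y2, j (z.1, y2, z.2.1, z.2.2)

/-- Marginal `p(y₂,u₁,u₂)`. -/
def bY2U (j : Y1 × Y2 × U1 × U2 → ℝ) : Y2 × U1 × U2 → ℝ :=
  fun z => ∑ y1, j (y1, z.1, z.2.1, z.2.2)

/-- Marginal `p(u₁,u₂)`. -/
def bU12 (j : Y1 × Y2 × U1 × U2 → ℝ) : U1 × U2 → ℝ :=
  fun u => ∑ y1, bY1U j (y1, u.1, u.2)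

/-- Marginal `p(u₂)`. -/
def bU2 (j : Y1 × Y2 × U1 × U2 → ℝ) : U2 → ℝ := fun u2 => ∑ u1, bU12 j (u1, u2)

/-- Marginal `p(u₁)`. -/
def bU1 (j : Y1 × Y2 × U1 × U2 → ℝ) : U1 → ℝ := fun u1 => ∑ u2, bU12 j (u1, u2)

/-- Marginal `p(y₁,u₂)`. -/
def bY1U2 (j : Y1 × Y2 × U1 × U2 → ℝ) : Y1 × U2 → ℝ :=
  fun z => ∑ u1, bY1U j (z.1, u1, z.2)

/-- Marginal `p(y₂,u₂)`. -/
def bY2U2 (j : Y1 × Y2 × U1 × U2 → ℝ) : Y2 × U2 → ℝ :=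
  fun z => ∑ u1, bY2U j (z.1, u1, z.2)

/-- Marginal `p(y₂,u₁)`. -/
def bY2U1 (j : Y1 × Y2 × U1 × U2 → ℝ) : Y2 × U1 → ℝ :=
  fun z => ∑ u2, bY2U j (z.1, z.2, u2)

/-- Marginal `p(y₁,u₁)`. -/
def bY1U1 (j : Y1 × Y2 × U1 × U2 → ℝ) : Y1 × U1 → ℝ :=
  fun z => ∑ u2, bY1U j (z.1, z.2, u2)

/-- Marginal `p(y₁)`. -/
def bY1 (j : Y1 × Y2 × U1 × U2 → ℝ) : Y1 → ℝ := fun y1 => ∑ u2, bY1U2 j (y1, u2)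

/-- Marginal `p(y₂)`. -/
def bY2 (j : Y1 × Y2 × U1 × U2 → ℝ) : Y2 → ℝ := fun y2 => ∑ u2, bY2U2 j (y2, u2)

/-- Conditional entropy `H(Y₁|U₁,U₂)`. -/
def bH1 (j : Y1 × Y2 × U1 × U2 → ℝ) : ℝ := ent (bY1U j) - ent (bU12 j)

/-- Conditional entropy `H(Y₂|U₁,U₂)`. -/
def bH2 (j : Y1 × Y2 × U1 × U2 → ℝ) : ℝ := ent (bY2U j) - ent (bU12 j)

/-- Conditional mutual information `I(Y₁;U₁|U₂)`. -/
def bI1c (j : Y1 × Y2 × U1 × U2 → ℝ) : ℝ :=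
  ent (bY1U2 j) + ent (bU12 j) - ent (bU2 j) - ent (bY1U j)

/-- Mutual information `I(Y₂;U₂)`. -/
def bI2m (j : Y1 × Y2 × U1 × U2 → ℝ) : ℝ := ent (bY2 j) + ent (bU2 j) - ent (bY2U2 j)

/-- Conditional mutual information `I(Y₂;U₂|U₁)`. -/
def bI2c (j : Y1 × Y2 × U1 × U2 → ℝ) : ℝ :=
  ent (bY2U1 j) + ent (bU12 j) - ent (bU1 j) - ent (bY2U j)

/-- Mutual information `I(Y₁;U₁)`. -/
def bI1m (j : Y1 × Y2 × U1 × U2 → ℝ) : ℝ := ent (bY1 j) + ent (bU1 j) - ent (bY1U1 j)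

/-- The functional
`F_β(P) = α H(Y₁|U₁,U₂) + (1−α) H(Y₂|U₁,U₂) + s₁ I(Y₁;U₁|U₂) + s₂ I(Y₂;U₂)`. -/
def Fb (s1 s2 a : ℝ) (j : Y1 × Y2 × U1 × U2 → ℝ) : ℝ :=
  a * bH1 j + (1 - a) * bH2 j + s1 * bI1c j + s2 * bI2m j

/-- `D¹_{BT,α}(R₁,R₂)`: the minimal `α H(Y₁|U₁,U₂) + (1−α) H(Y₂|U₁,U₂)` over test-channel
pairs into `V1`, `V2`, subject to `I(Y₁;U₁|U₂) ≤ R₁` and `I(Y₂;U₂) ≤ R₂`. -/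
def Dbt1 (V1 V2 : Type) [Fintype V1] [Fintype V2]
    (pY : Y1 × Y2 → ℝ) (a R1 R2 : ℝ) : ℝ :=
  sInf {d : ℝ | ∃ p1 : Y1 → V1 → ℝ, ∃ p2 : Y2 → V2 → ℝ, IsChan p1 ∧ IsChan p2 ∧
    bI1c (btJoint pY p1 p2) ≤ R1 ∧ bI2m (btJoint pY p1 p2) ≤ R2 ∧
    d = a * bH1 (btJoint pY p1 p2) + (1 - a) * bH2 (btJoint pY p1 p2)}

/-- `D²_{BT,α}(R₁,R₂)`: the minimal `α H(Y₁|U₁,U₂) + (1−α) H(Y₂|U₁,U₂)` subject to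
`I(Y₂;U₂|U₁) ≤ R₂` and `I(Y₁;U₁) ≤ R₁`. -/
def Dbt2 (V1 V2 : Type) [Fintype V1] [Fintype V2]
    (pY : Y1 × Y2 → ℝ) (a R1 R2 : ℝ) : ℝ :=
  sInf {d : ℝ | ∃ p1 : Y1 → V1 → ℝ, ∃ p2 : Y2 → V2 → ℝ, IsChan p1 ∧ IsChan p2 ∧
    bI2c (btJoint pY p1 p2) ≤ R2 ∧ bI1m (btJoint pY p1 p2) ≤ R1 ∧
    d = a * bH1 (btJoint pY p1 p2) + (1 - a) * bH2 (btJoint pY p1 p2)}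

/-- Source marginal `p(y₁)`. -/
def bpY1 (pY : Y1 × Y2 → ℝ) : Y1 → ℝ := fun y1 => ∑ y2, pY (y1, y2)

/-- Source marginal `p(y₂)`. -/
def bpY2 (pY : Y1 × Y2 → ℝ) : Y2 → ℝ := fun y2 => ∑ y1, pY (y1, y2)

/-- Induced marginal `p(u₂) = Σ_{y₂} p(y₂) p(u₂|y₂)`. -/
def bpU2m (pY : Y1 × Y2 → ℝ) (p2 : Y2 → U2 → ℝ) : U2 → ℝ :=
  fun u2 => ∑ y2, bpY2 pY y2 * p2 y2 u2

/-- Induced joint `p(u₁,u₂,y₁) = Σ_{y₂} p(y₁,y₂) p(u₁|y₁) p(u₂|y₂)`. -/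
def bpUUY1 (pY : Y1 × Y2 → ℝ) (p1 : Y1 → U1 → ℝ) (p2 : Y2 → U2 → ℝ) :
    U1 × U2 × Y1 → ℝ :=
  fun z => ∑ y2, pY (z.2.2, y2) * p1 z.2.2 z.1 * p2 y2 z.2.1

/-- Induced joint `p(u₁,u₂,y₂) = Σ_{y₁} p(y₁,y₂) p(u₁|y₁) p(u₂|y₂)`. -/
def bpUUY2 (pY : Y1 × Y2 → ℝ) (p1 : Y1 → U1 → ℝ) (p2 : Y2 → U2 → ℝ) :
    U1 × U2 × Y2 → ℝ :=
  fun z => ∑ y1, pY (y1, z.2.2) * p1 y1 z.1 * p2 z.2.2 z.2.1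

/-- Induced marginal `p(u₁,u₂)`. -/
def bpUU (pY : Y1 × Y2 → ℝ) (p1 : Y1 → U1 → ℝ) (p2 : Y2 → U2 → ℝ) : U1 × U2 → ℝ :=
  fun u => ∑ y1, bpUUY1 pY p1 p2 (u.1, u.2, y1)

/-- The multiterminal Blahut–Arimoto functional `F_β(P,Q)` (real-valued version;
the convention `0 · log 0 = 0` is automatic since vanishing coefficients kill terms). -/
def FbPQ (s1 s2 a : ℝ) (pY : Y1 × Y2 → ℝ) (p1 : Y1 → U1 → ℝ) (p2 : Y2 → U2 → ℝ)
    (qY1 : U1 × U2 → Y1 → ℝ) (qY2 : U1 × U2 → Y2 → ℝ)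
    (qUU : U1 × U2 → ℝ) (qU2 : U2 → ℝ) : ℝ :=
  s1 * (∑ u1, ∑ y1, p1 y1 u1 * bpY1 pY y1 * Real.log (p1 y1 u1))
  + s2 * (∑ u2, ∑ y2, p2 y2 u2 * bpY2 pY y2 * Real.log (p2 y2 u2))
  + s1 * (∑ u2, bpU2m pY p2 u2 * Real.log (bpU2m pY p2 u2))
  - s2 * (∑ u2, bpU2m pY p2 u2 * Real.log (qU2 u2))
  - a * (∑ u1, ∑ u2, ∑ y1, bpUUY1 pY p1 p2 (u1, u2, y1) * Real.log (qY1 (u1, u2) y1))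
  - (1 - a) * (∑ u1, ∑ u2, ∑ y2, bpUUY2 pY p1 p2 (u1, u2, y2) * Real.log (qY2 (u1, u2) y2))
  - s1 * (∑ u1, ∑ u2, bpUU pY p1 p2 (u1, u2) * Real.log (qUU (u1, u2)))

/-- The multiterminal Blahut–Arimoto functional `F_β(P,Q)`, with values in `ℝ ∪ {+∞}`
(a term `−a log q` with positive coefficient and `q = 0` is `+∞`). -/
def FbPQE (s1 s2 a : ℝ) (pY : Y1 × Y2 → ℝ) (p1 : Y1 → U1 → ℝ) (p2 : Y2 → U2 → ℝ)
    (qY1 : U1 × U2 → Y1 → ℝ) (qY2 : U1 × U2 → Y2 → ℝ)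
    (qUU : U1 × U2 → ℝ) (qU2 : U2 → ℝ) : EReal :=
  ((s1 * (∑ u1, ∑ y1, p1 y1 u1 * bpY1 pY y1 * Real.log (p1 y1 u1))
    + s2 * (∑ u2, ∑ y2, p2 y2 u2 * bpY2 pY y2 * Real.log (p2 y2 u2))
    + s1 * (∑ u2, bpU2m pY p2 u2 * Real.log (bpU2m pY p2 u2)) : ℝ) : EReal)
  + (∑ u2, nlogE (s2 * bpU2m pY p2 u2) (qU2 u2))
  + (∑ u1, ∑ u2, ∑ y1, nlogE (a * bpUUY1 pY p1 p2 (u1, u2, y1)) (qY1 (u1, u2) y1))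
  + (∑ u1, ∑ u2, ∑ y2, nlogE ((1 - a) * bpUUY2 pY p1 p2 (u1, u2, y2)) (qY2 (u1, u2) y2))
  + (∑ u1, ∑ u2, nlogE (s1 * bpUU pY p1 p2 (u1, u2)) (qUU (u1, u2)))

variable {Qt : Type} [Fintype Qt]

/-- The joint pmf `p(q,y₁,y₂,u₁,u₂) = p(q)p(y₁,y₂)p(u₁|y₁,q)p(u₂|y₂,q)` induced by a
time-sharing variable `Q` and conditional test channels. -/
def btJointQ (pQ : Qt → ℝ) (pY : Y1 × Y2 → ℝ)
    (c1 : Qt → Y1 → U1 → ℝ) (c2 : Qt → Y2 → U2 → ℝ) :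
    Qt × Y1 × Y2 × U1 × U2 → ℝ :=
  fun z => pQ z.1 * pY (z.2.1, z.2.2.1) * c1 z.1 z.2.1 z.2.2.2.1 * c2 z.1 z.2.2.1 z.2.2.2.2

/-- Marginal `p(u₁,u₂,q)`. -/
def bqU12 (j : Qt × Y1 × Y2 × U1 × U2 → ℝ) : U1 × U2 × Qt → ℝ :=
  fun z => ∑ y1, ∑ y2, j (z.2.2, y1, y2, z.1, z.2.1)

/-- Marginal `p(u₂,q)`. -/
def bqU2 (j : Qt × Y1 × Y2 × U1 × U2 → ℝ) : U2 × Qt → ℝ :=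
  fun z => ∑ u1, bqU12 j (u1, z.1, z.2)

/-- Marginal `p(u₁,q)`. -/
def bqU1 (j : Qt × Y1 × Y2 × U1 × U2 → ℝ) : U1 × Qt → ℝ :=
  fun z => ∑ u2, bqU12 j (z.1, u2, z.2)

/-- Marginal `p(y₁,u₂,q)`. -/
def bqY1U2 (j : Qt × Y1 × Y2 × U1 × U2 → ℝ) : Y1 × U2 × Qt → ℝ :=
  fun z => ∑ y2, ∑ u1, j (z.2.2, z.1, y2, u1, z.2.1)

/-- Marginal `p(y₁,u₁,u₂,q)`. -/
def bqY1U12 (j : Qt × Y1 × Y2 × U1 × U2 → ℝ) : Y1 × U1 × U2 × Qt → ℝ :=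
  fun z => ∑ y2, j (z.2.2.2, z.1, y2, z.2.1, z.2.2.1)

/-- Marginal `p(y₂,u₁,q)`. -/
def bqY2U1 (j : Qt × Y1 × Y2 × U1 × U2 → ℝ) : Y2 × U1 × Qt → ℝ :=
  fun z => ∑ y1, ∑ u2, j (z.2.2, y1, z.1, z.2.1, u2)

/-- Marginal `p(y₂,u₁,u₂,q)`. -/
def bqY2U12 (j : Qt × Y1 × Y2 × U1 × U2 → ℝ) : Y2 × U1 × U2 × Qt → ℝ :=
  fun z => ∑ y1, j (z.2.2.2, y1, z.1, z.2.1, z.2.2.1)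

/-- Marginal `p(y₁,y₂,q)`. -/
def bqY12 (j : Qt × Y1 × Y2 × U1 × U2 → ℝ) : Y1 × Y2 × Qt → ℝ :=
  fun z => ∑ u1, ∑ u2, j (z.2.2, z.1, z.2.1, u1, u2)

/-- Marginal `p(q)`. -/
def bqQ (j : Qt × Y1 × Y2 × U1 × U2 → ℝ) : Qt → ℝ :=
  fun q => ∑ y1, ∑ y2, bqY12 j (y1, y2, q)

/-- Conditional mutual information `I(U₁;Y₁|U₂,Q)`. -/
def bIQ1 (j : Qt × Y1 × Y2 × U1 × U2 → ℝ) : ℝ :=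
  ent (bqY1U2 j) + ent (bqU12 j) - ent (bqU2 j) - ent (bqY1U12 j)

/-- Conditional mutual information `I(U₂;Y₂|U₁,Q)`. -/
def bIQ2 (j : Qt × Y1 × Y2 × U1 × U2 → ℝ) : ℝ :=
  ent (bqY2U1 j) + ent (bqU12 j) - ent (bqU1 j) - ent (bqY2U12 j)

/-- Conditional mutual information `I(U₁,U₂;Y₁,Y₂|Q)`. -/
def bIQsum (j : Qt × Y1 × Y2 × U1 × U2 → ℝ) : ℝ :=
  ent (bqY12 j) + ent (bqU12 j) - ent (bqQ j) - ent j

/-- Conditional entropy `H(Y₁|U₁,U₂,Q)`. -/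
def bHQ1 (j : Qt × Y1 × Y2 × U1 × U2 → ℝ) : ℝ := ent (bqY1U12 j) - ent (bqU12 j)

/-- Conditional entropy `H(Y₂|U₁,U₂,Q)`. -/
def bHQ2 (j : Qt × Y1 × Y2 × U1 × U2 → ℝ) : ℝ := ent (bqY2U12 j) - ent (bqU12 j)


/-! ### Abstract convex-geometry facts -/

/-- The convex hull of a compact planar set is compact (Carathéodory). -/
lemma aux_compact_hull {K : Set (ℝ × ℝ)} (hK : IsCompact K) (hne : K.Nonempty) :
    IsCompact (convexHull ℝ K) := by
  obtain ⟨k0, hk0⟩ := hne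
  have hc : IsCompact ((stdSimplex ℝ (Fin 3)) ×ˢ (Set.univ.pi fun _ : Fin 3 => K)) :=
    (isCompact_stdSimplex ℝ (Fin 3)).prod (isCompact_univ_pi fun _ => hK)
  have hcont : Continuous (fun x : (Fin 3 → ℝ) × (Fin 3 → ℝ × ℝ) => ∑ i, x.1 i • x.2 i) := by
    fun_prop
  have heq : convexHull ℝ K = (fun x : (Fin 3 → ℝ) × (Fin 3 → ℝ × ℝ) => ∑ i, x.1 i • x.2 i) ''
      ((stdSimplex ℝ (Fin 3)) ×ˢ (Set.univ.pi fun _ : Fin 3 => K)) := by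
    apply Set.Subset.antisymm
    · intro x hx
      obtain ⟨ι, _, z, w, hz, hai, hw, hw1, hx⟩ := eq_pos_convex_span_of_mem_convexHull hx
      have hcard : Fintype.card ι ≤ Fintype.card (Fin 3) := by
        have h1 := hai.card_le_finrank_succ
        have h2 : Module.finrank ℝ (vectorSpan ℝ (Set.range z)) ≤ Module.finrank ℝ (ℝ × ℝ) :=
          Submodule.finrank_le _
        simp at h2
        simp
        omega
      obtain ⟨e⟩ := Function.Embedding.nonempty_of_card_le hcard
      refine ⟨(Function.extend e w 0, Function.extend e z (fun _ => k0)), ⟨⟨?_, ?_⟩, ?_⟩, ?_⟩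
      · intro i
        by_cases h : ∃ j, e j = i
        · obtain ⟨j, rfl⟩ := h
          simp only [e.injective.extend_apply]
          exact (hw j).le
        · simp [Function.extend_apply' _ _ _ h]
      · rw [← hw1]
        symm
        apply Fintype.sum_of_injective e e.injective
        · intro i h
          simp [Function.extend_apply' (f := e) w (0 : Fin 3 → ℝ) i (by simpa using h)]
        · intro i
          simp [e.injective.extend_apply]
      · intro i _
        by_cases h : ∃ j, e j = i
        · obtain ⟨j, rfl⟩ := h
          simp only [e.injective.extend_apply]
          exact hz ⟨j, rfl⟩
        · simp only [Function.extend_apply' _ _ _ h]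
          exact hk0
      · rw [← hx]
        symm
        apply Fintype.sum_of_injective e e.injective
        · intro i h
          simp [Function.extend_apply' (f := e) w (0 : Fin 3 → ℝ) i (by simpa using h)]
        · intro i
          simp [e.injective.extend_apply]
    · rintro _ ⟨⟨w, z⟩, ⟨⟨hw, hw1⟩, hz⟩, rfl⟩
      exact (convex_convexHull ℝ K).sum_mem (fun i _ => hw i) hw1
        (fun i _ => subset_convexHull ℝ K (hz i (Set.mem_univ i)))
  rw [heq]
  exact hc.image hcont

open scoped Pointwise in
/-- Scalarization: a point lying above all supporting lines belongs to the convex hull of the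
upper set generated by a compact planar set. -/
lemma aux_scalar {K : Set (ℝ × ℝ)} (hK : IsCompact K) (hne : K.Nonempty) (d1 d2 : ℝ)
    (h : ∀ a : ℝ, 0 ≤ a → a ≤ 1 → ∀ u : ℝ,
      (∀ k ∈ K, u ≤ a * k.1 + (1 - a) * k.2) → u ≤ a * d1 + (1 - a) * d2) :
    (d1, d2) ∈ convexHull ℝ (K + Set.Ici (0 : ℝ × ℝ)) := by
  rw [convexHull_add, (convex_Ici (𝕜 := ℝ) (0 : ℝ × ℝ)).convexHull_eq]
  have hclosed : IsClosed (convexHull ℝ K + Set.Ici (0 : ℝ × ℝ)) :=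
    isClosed_Ici.add_left_of_isCompact (aux_compact_hull hK hne)
  by_contra hd
  obtain ⟨f, u, hfd, hfu⟩ := geometric_hahn_banach_point_closed
    ((convex_convexHull ℝ K).add (convex_Ici (𝕜 := ℝ) (0 : ℝ × ℝ))) hclosed hd
  have hf : ∀ x y : ℝ, f (x, y) = f (1, 0) * x + f (0, 1) * y := by
    intro x y
    have : ((x, y) : ℝ × ℝ) = x • (1, 0) + y • (0, 1) := by simp
    rw [this, map_add, map_smul, map_smul]
    simp [mul_comm]
  set α := f (1, 0)
  set β := f (0, 1)
  have hk : ∀ k ∈ K, ∀ x y : ℝ, 0 ≤ x → 0 ≤ y → u < α * (k.1 + x) + β * (k.2 + y) := by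
    intro k hk x y hx hy
    rw [← hf]
    apply hfu
    refine ⟨k, subset_convexHull ℝ K hk, (x, y), ?_, ?_⟩
    · exact ⟨hx, hy⟩
    · ext <;> rfl
  obtain ⟨k0, hk0⟩ := hne
  rw [hf] at hfd
  have hα : 0 ≤ α := by
    by_contra hα
    push Not at hα
    have h0 := hk k0 hk0 0 0 le_rfl le_rfl
    have := hk k0 hk0 ((u - (α * k0.1 + β * k0.2)) / α) 0
      (div_nonneg_of_nonpos (by linarith) hα.le) le_rfl
    rw [mul_add, mul_div_cancel₀ _ hα.ne] at this
    linarith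
  have hβ : 0 ≤ β := by
    by_contra hβ
    push Not at hβ
    have h0 := hk k0 hk0 0 0 le_rfl le_rfl
    have := hk k0 hk0 0 ((u - (α * k0.1 + β * k0.2)) / β) le_rfl
      (div_nonneg_of_nonpos (by linarith) hβ.le)
    rw [mul_add β, mul_div_cancel₀ _ hβ.ne] at this
    linarith
  have hs : 0 < α + β := by
    rcases (add_nonneg hα hβ).lt_or_eq with h1 | h1
    · exact h1
    · have e1 : α = 0 := by linarith
      have e2 : β = 0 := by linarith
      have h0 := hk k0 hk0 0 0 le_rfl le_rfl
      rw [e1, e2] at h0 hfd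
      linarith
  have e : ∀ x y : ℝ, α / (α + β) * x + (1 - α / (α + β)) * y = (α * x + β * y) / (α + β) := by
    intro x y
    field_simp
    ring
  have := h (α / (α + β)) (by positivity) ((div_le_one hs).2 (by linarith)) (u / (α + β)) (by
    intro k hkK
    rw [e]
    have := hk k hkK 0 0 le_rfl le_rfl
    gcongr
    simpa using this.le)
  rw [e, div_le_div_iff_of_pos_right hs] at this
  linarith

/-! ### Entropy facts -/

/-- Subadditivity of (unnormalized) entropy for two variables. -/
lemma aux_subadd {X Y : Type} [Fintype X] [Fintype Y] (f : X → Y → ℝ) (hf : ∀ x y, 0 ≤ f x y) :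
    ∑ x, ∑ y, negMulLog (f x y) + negMulLog (∑ x, ∑ y, f x y) ≤
      ∑ x, negMulLog (∑ y, f x y) + ∑ y, negMulLog (∑ x, f x y) := by
  set T := ∑ x, ∑ y, f x y with hT
  set a : X → ℝ := fun x => ∑ y, f x y with ha
  set b : Y → ℝ := fun y => ∑ x, f x y with hb
  have haT : ∑ x, a x = T := rfl
  have hbT : ∑ y, b y = T := Finset.sum_comm
  have ha0 : ∀ x, 0 ≤ a x := fun x => Finset.sum_nonneg fun y _ => hf x y
  have hb0 : ∀ y, 0 ≤ b y := fun y => Finset.sum_nonneg fun x _ => hf x y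
  have hT0 : 0 ≤ T := Finset.sum_nonneg fun x _ => ha0 x
  have key : ∀ x y, f x y * (Real.log (a x) + Real.log (b y) - Real.log (f x y) - Real.log T)
      ≤ a x * b y / T - f x y := by
    intro x y
    rcases (hf x y).lt_or_eq with h | h
    · have h1 : 0 < a x := h.trans_le (Finset.single_le_sum (f := fun y => f x y)
        (fun y _ => hf x y) (Finset.mem_univ y))
      have h2 : 0 < b y := h.trans_le (Finset.single_le_sum (f := fun x => f x y)
        (fun x _ => hf x y) (Finset.mem_univ x))
      have h3 : 0 < T := h1.trans_le (Finset.single_le_sum (f := a)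
        (fun x _ => ha0 x) (Finset.mem_univ x))
      have h4 := Real.log_le_sub_one_of_pos (x := a x * b y / (f x y * T)) (by positivity)
      rw [Real.log_div (by positivity) (by positivity), Real.log_mul h1.ne' h2.ne',
        Real.log_mul h.ne' h3.ne'] at h4
      have h5 := mul_le_mul_of_nonneg_left h4 h.le
      have h6 : f x y * (a x * b y / (f x y * T) - 1) = a x * b y / T - f x y := by
        field_simp
      rw [h6] at h5
      linarith
    · rw [← h]
      have := ha0 x
      have := hb0 y
      simp
      positivity
  have hsum := Finset.sum_le_sum fun x (_ : x ∈ Finset.univ) =>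
    Finset.sum_le_sum fun y (_ : y ∈ Finset.univ) => key x y
  have hr : ∑ x, ∑ y, (a x * b y / T - f x y) = 0 := by
    simp only [Finset.sum_sub_distrib, ← Finset.sum_div, ← Finset.mul_sum, hbT, ← Finset.sum_mul, haT]
    change T * T / T - T = 0
    rcases eq_or_ne T 0 with h | h
    · simp [h]
    · field_simp
      ring
  have hl : ∑ x, ∑ y, f x y *
      (Real.log (a x) + Real.log (b y) - Real.log (f x y) - Real.log T)
      = (∑ x, ∑ y, negMulLog (f x y) + negMulLog T)
        - (∑ x, negMulLog (a x) + ∑ y, negMulLog (b y)) := by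
    have e1 : ∑ x, negMulLog (a x) = - ∑ x, ∑ y, f x y * Real.log (a x) := by
      rw [← Finset.sum_neg_distrib]
      refine Finset.sum_congr rfl fun x _ => ?_
      rw [← Finset.sum_mul, negMulLog, neg_mul]
    have e2 : ∑ y, negMulLog (b y) = - ∑ x, ∑ y, f x y * Real.log (b y) := by
      rw [Finset.sum_comm, ← Finset.sum_neg_distrib]
      refine Finset.sum_congr rfl fun x _ => ?_
      rw [← Finset.sum_mul, negMulLog, neg_mul]
    have e3 : negMulLog T = - ∑ x, ∑ y, f x y * Real.log T := by
      simp only [← Finset.sum_mul]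
      rw [negMulLog, neg_mul]
    have e4 : ∑ x, ∑ y, negMulLog (f x y) = - ∑ x, ∑ y, f x y * Real.log (f x y) := by
      simp only [← Finset.sum_neg_distrib, negMulLog, neg_mul]
    rw [e1, e2, e3, e4]
    simp only [mul_sub, mul_add, Finset.sum_sub_distrib, Finset.sum_add_distrib]
    ring
  linarith

/-- Entropy of a mixture decomposes along the time-sharing variable. -/
lemma aux_entQ {Q X : Type} [Fintype Q] [Fintype X] (p : Q → ℝ) (f : Q → X → ℝ)
    (hf : ∀ q, ∑ x, f q x = 1) :
    ∑ q, ∑ x, negMulLog (p q * f q x) = ∑ q, p q * ent (f q) + ent p := by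
  simp only [ent, ← Finset.sum_add_distrib]
  refine Finset.sum_congr rfl fun q _ => ?_
  simp only [negMulLog_mul, Finset.sum_add_distrib, ← Finset.sum_mul, ← Finset.mul_sum, hf]
  ring

/-- Chain rule for a channel. -/
lemma aux_chain {X U : Type} [Fintype X] [Fintype U] (f : X → ℝ) (w : X → U → ℝ)
    (hw : IsChan w) :
    ∑ x, ∑ u, negMulLog (f x * w x u) = ∑ x, negMulLog (f x) + ∑ x, f x * ent (w x) := by
  simp only [← Finset.sum_add_distrib]
  refine Finset.sum_congr rfl fun x _ => ?_
  simp only [negMulLog_mul, Finset.sum_add_distrib, ← Finset.sum_mul, ← Finset.mul_sum, (hw x).2,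
    ent]
  ring

/-! ### Marginals of the induced joint pmf -/

section marginals

set_option linter.unusedSectionVars false

variable (pY : Y1 × Y2 → ℝ) (p1 : Y1 → U1 → ℝ) (p2 : Y2 → U2 → ℝ)

/-- `H(U₁|Y₁)`. -/
def auxE1 : ℝ := ∑ y1, bpY1 pY y1 * ent (p1 y1)

/-- `H(U₂|Y₂)`. -/
def auxE2 : ℝ := ∑ y2, bpY2 pY y2 * ent (p2 y2)

variable {p1 p2}

lemma aux_mY1U2 (h1 : IsChan p1) (y1 : Y1) (u2 : U2) :
    bY1U2 (btJoint pY p1 p2) (y1, u2) = ∑ y2, pY (y1, y2) * p2 y2 u2 := by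
  simp only [bY1U2, bY1U, btJoint]
  rw [Finset.sum_comm]
  refine Finset.sum_congr rfl fun y2 _ => ?_
  rw [← Finset.sum_mul, ← Finset.mul_sum, (h1 y1).2, mul_one]

lemma aux_mY2U1 (h2 : IsChan p2) (y2 : Y2) (u1 : U1) :
    bY2U1 (btJoint pY p1 p2) (y2, u1) = ∑ y1, pY (y1, y2) * p1 y1 u1 := by
  simp only [bY2U1, bY2U, btJoint]
  rw [Finset.sum_comm]
  refine Finset.sum_congr rfl fun y1 _ => ?_
  rw [← Finset.mul_sum, (h2 y2).2, mul_one]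

lemma aux_mY1U (h1 : IsChan p1) (y1 : Y1) (u1 : U1) (u2 : U2) :
    bY1U (btJoint pY p1 p2) (y1, u1, u2) = bY1U2 (btJoint pY p1 p2) (y1, u2) * p1 y1 u1 := by
  rw [aux_mY1U2 pY h1, Finset.sum_mul]
  simp only [bY1U, btJoint]
  refine Finset.sum_congr rfl fun y2 _ => ?_
  ring

lemma aux_mY2U (h2 : IsChan p2) (y2 : Y2) (u1 : U1) (u2 : U2) :
    bY2U (btJoint pY p1 p2) (y2, u1, u2) = bY2U1 (btJoint pY p1 p2) (y2, u1) * p2 y2 u2 := by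
  rw [aux_mY2U1 pY h2, Finset.sum_mul]
  simp only [bY2U, btJoint]

lemma aux_mY1U1 (h2 : IsChan p2) (y1 : Y1) (u1 : U1) :
    bY1U1 (btJoint pY p1 p2) (y1, u1) = bpY1 pY y1 * p1 y1 u1 := by
  simp only [bY1U1, bY1U, btJoint, bpY1]
  rw [Finset.sum_comm, Finset.sum_mul]
  refine Finset.sum_congr rfl fun y2 _ => ?_
  rw [← Finset.mul_sum, (h2 y2).2, mul_one]

lemma aux_mY2U2 (h1 : IsChan p1) (y2 : Y2) (u2 : U2) :
    bY2U2 (btJoint pY p1 p2) (y2, u2) = bpY2 pY y2 * p2 y2 u2 := by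
  simp only [bY2U2, bY2U, btJoint, bpY2]
  rw [Finset.sum_comm, Finset.sum_mul]
  refine Finset.sum_congr rfl fun y1 _ => ?_
  rw [← Finset.sum_mul, ← Finset.mul_sum, (h1 y1).2, mul_one]

lemma aux_mY1 (h1 : IsChan p1) (h2 : IsChan p2) : bY1 (btJoint pY p1 p2) = bpY1 pY := by
  funext y1
  simp only [bY1, aux_mY1U2 pY h1, bpY1]
  rw [Finset.sum_comm]
  simp only [← Finset.mul_sum, (h2 _).2, mul_one]

lemma aux_mY2 (h1 : IsChan p1) (h2 : IsChan p2) : bY2 (btJoint pY p1 p2) = bpY2 pY := by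
  funext y2
  simp only [bY2, aux_mY2U2 pY h1]
  simp only [← Finset.mul_sum, (h2 _).2, mul_one]

lemma aux_sY1U2 (h1 : IsChan p1) (h2 : IsChan p2) (y1 : Y1) :
    ∑ u2, bY1U2 (btJoint pY p1 p2) (y1, u2) = bpY1 pY y1 := by
  rw [← aux_mY1 pY h1 h2]; rfl

lemma aux_sY2U1 (h2 : IsChan p2) (h1 : IsChan p1) (y2 : Y2) :
    ∑ u1, bY2U1 (btJoint pY p1 p2) (y2, u1) = bpY2 pY y2 := by
  simp only [aux_mY2U1 pY h2, bpY2]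
  rw [Finset.sum_comm]
  simp only [← Finset.mul_sum, (h1 _).2, mul_one]

lemma aux_entY1U (h1 : IsChan p1) (h2 : IsChan p2) :
    ent (bY1U (btJoint pY p1 p2)) = ent (bY1U2 (btJoint pY p1 p2)) + auxE1 pY p1 := by
  have := aux_chain (fun x : Y1 × U2 => bY1U2 (btJoint pY p1 p2) x) (fun x u => p1 x.1 u)
    (fun x => h1 x.1)
  simp only [Fintype.sum_prod_type] at this
  simp only [ent, auxE1, Fintype.sum_prod_type, aux_mY1U pY h1] at this ⊢
  simp only [← aux_sY1U2 pY h1 h2, Finset.sum_mul]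
  rw [← this]
  exact Finset.sum_congr rfl fun y1 _ => Finset.sum_comm

lemma aux_entY2U (h1 : IsChan p1) (h2 : IsChan p2) :
    ent (bY2U (btJoint pY p1 p2)) = ent (bY2U1 (btJoint pY p1 p2)) + auxE2 pY p2 := by
  have := aux_chain (fun x : Y2 × U1 => bY2U1 (btJoint pY p1 p2) x) (fun x u => p2 x.1 u)
    (fun x => h2 x.1)
  simp only [Fintype.sum_prod_type] at this
  simp only [ent, auxE2, Fintype.sum_prod_type, aux_mY2U pY h2] at this ⊢
  simp only [← aux_sY2U1 pY h2 h1, Finset.sum_mul]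
  rw [← this]

lemma aux_entY1U1 (h1 : IsChan p1) (h2 : IsChan p2) :
    ent (bY1U1 (btJoint pY p1 p2)) = ent (bY1 (btJoint pY p1 p2)) + auxE1 pY p1 := by
  have := aux_chain (bpY1 pY) p1 h1
  simp only [ent, auxE1, Fintype.sum_prod_type, aux_mY1U1 pY h2, aux_mY1 pY h1 h2] at this ⊢
  exact this

lemma aux_entY2U2 (h1 : IsChan p1) (h2 : IsChan p2) :
    ent (bY2U2 (btJoint pY p1 p2)) = ent (bY2 (btJoint pY p1 p2)) + auxE2 pY p2 := by
  have := aux_chain (bpY2 pY) p2 h2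
  simp only [ent, auxE2, Fintype.sum_prod_type, aux_mY2U2 pY h1, aux_mY2 pY h1 h2] at this ⊢
  exact this

lemma aux_entJ (h1 : IsChan p1) (h2 : IsChan p2) :
    ent (btJoint pY p1 p2) = ent pY + auxE1 pY p1 + auxE2 pY p2 := by
  have t1 := aux_chain (fun x : (Y1 × Y2) × U1 => pY x.1 * p1 x.1.1 x.2)
    (fun x u => p2 x.1.2 u) (fun x => h2 x.1.2)
  have t2 := aux_chain pY (fun x u => p1 x.1 u) (fun x => h1 x.1)
  simp only [Fintype.sum_prod_type] at t1 t2
  rw [t2] at t1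
  have e1 : ∑ y1, ∑ y2, pY (y1, y2) * ent (p1 y1) = auxE1 pY p1 := by
    simp only [auxE1, bpY1, Finset.sum_mul]
  have e2 : ∑ y1, ∑ y2, ∑ u1, pY (y1, y2) * p1 y1 u1 * ent (p2 y2) = auxE2 pY p2 := by
    simp only [auxE2, bpY2, Finset.sum_mul]
    rw [Finset.sum_comm]
    simp only [← Finset.sum_mul, ← Finset.mul_sum, (h1 _).2, mul_one]
  have e1' : ∑ y1, ∑ y2, pY (y1, y2) * ent (fun u => p1 y1 u) = auxE1 pY p1 := e1
  have e2' : ∑ y1, ∑ y2, ∑ u1, pY (y1, y2) * p1 y1 u1 * ent (fun u => p2 y2 u) = auxE2 pY p2 := e2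
  rw [e1', e2'] at t1
  simp only [ent, Fintype.sum_prod_type, btJoint]
  exact t1

/-- `I(Y₁;U₁|U₂) = H(U₁,U₂) - H(U₂) - H(U₁|Y₁)`. -/
lemma aux_I1c (h1 : IsChan p1) (h2 : IsChan p2) : bI1c (btJoint pY p1 p2) =
    ent (bU12 (btJoint pY p1 p2)) - ent (bU2 (btJoint pY p1 p2)) - auxE1 pY p1 := by
  rw [bI1c, aux_entY1U pY h1 h2]; ring

lemma aux_I2c (h1 : IsChan p1) (h2 : IsChan p2) : bI2c (btJoint pY p1 p2) =
    ent (bU12 (btJoint pY p1 p2)) - ent (bU1 (btJoint pY p1 p2)) - auxE2 pY p2 := by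
  rw [bI2c, aux_entY2U pY h1 h2]; ring

lemma aux_I1m (h1 : IsChan p1) (h2 : IsChan p2) : bI1m (btJoint pY p1 p2) =
    ent (bU1 (btJoint pY p1 p2)) - auxE1 pY p1 := by
  rw [bI1m, aux_entY1U1 pY h1 h2]; ring

lemma aux_I2m (h1 : IsChan p1) (h2 : IsChan p2) : bI2m (btJoint pY p1 p2) =
    ent (bU2 (btJoint pY p1 p2)) - auxE2 pY p2 := by
  rw [bI2m, aux_entY2U2 pY h1 h2]; ring

variable {pY}

lemma aux_J_nonneg (hpY : IsPmf pY) (h1 : IsChan p1) (h2 : IsChan p2) (z) :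
    0 ≤ btJoint pY p1 p2 z :=
  mul_nonneg (mul_nonneg (hpY.1 _) ((h1 _).1 _)) ((h2 _).1 _)

lemma aux_sum_bY1 (hpY : IsPmf pY) : ∑ y, bpY1 pY y = 1 := by
  rw [← hpY.2, Fintype.sum_prod_type]; rfl

lemma aux_sum_bY2 (hpY : IsPmf pY) : ∑ y, bpY2 pY y = 1 := by
  rw [← hpY.2, Fintype.sum_prod_type, Finset.sum_comm]; rfl

lemma aux_sum_Y1U (hpY : IsPmf pY) (h1 : IsChan p1) (h2 : IsChan p2) :
    ∑ z, bY1U (btJoint pY p1 p2) z = 1 := by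
  simp only [Fintype.sum_prod_type, aux_mY1U pY h1, ← Finset.sum_mul, aux_sY1U2 pY h1 h2]
  simp only [← Finset.mul_sum, (h1 _).2, mul_one, aux_sum_bY1 hpY]

lemma aux_sum_Y2U (hpY : IsPmf pY) (h1 : IsChan p1) (h2 : IsChan p2) :
    ∑ z, bY2U (btJoint pY p1 p2) z = 1 := by
  simp only [Fintype.sum_prod_type, aux_mY2U pY h2, ← Finset.mul_sum, (h2 _).2, mul_one,
    aux_sY2U1 pY h2 h1, aux_sum_bY2 hpY]

lemma aux_sum_Y1U2 (hpY : IsPmf pY) (h1 : IsChan p1) (h2 : IsChan p2) :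
    ∑ z, bY1U2 (btJoint pY p1 p2) z = 1 := by
  simp only [Fintype.sum_prod_type, aux_sY1U2 pY h1 h2, aux_sum_bY1 hpY]

lemma aux_sum_Y2U1 (hpY : IsPmf pY) (h1 : IsChan p1) (h2 : IsChan p2) :
    ∑ z, bY2U1 (btJoint pY p1 p2) z = 1 := by
  simp only [Fintype.sum_prod_type, aux_sY2U1 pY h2 h1, aux_sum_bY2 hpY]

lemma aux_sum_U12 (hpY : IsPmf pY) (h1 : IsChan p1) (h2 : IsChan p2) :
    ∑ z, bU12 (btJoint pY p1 p2) z = 1 := by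
  rw [← aux_sum_Y1U hpY h1 h2, Fintype.sum_prod_type (f := bY1U (btJoint pY p1 p2)),
    Finset.sum_comm]
  rfl

lemma aux_sum_U2 (hpY : IsPmf pY) (h1 : IsChan p1) (h2 : IsChan p2) :
    ∑ z, bU2 (btJoint pY p1 p2) z = 1 := by
  rw [← aux_sum_U12 hpY h1 h2, Fintype.sum_prod_type (f := bU12 (btJoint pY p1 p2)),
    Finset.sum_comm]
  rfl

lemma aux_sum_U1 (hpY : IsPmf pY) (h1 : IsChan p1) (h2 : IsChan p2) :
    ∑ z, bU1 (btJoint pY p1 p2) z = 1 := by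
  rw [← aux_sum_U12 hpY h1 h2, Fintype.sum_prod_type (f := bU12 (btJoint pY p1 p2))]
  rfl

lemma aux_sum_J (hpY : IsPmf pY) (h1 : IsChan p1) (h2 : IsChan p2) :
    ∑ z, btJoint pY p1 p2 z = 1 := by
  simp only [Fintype.sum_prod_type, btJoint, ← Finset.mul_sum, (h1 _).2, (h2 _).2, mul_one]
  rw [← hpY.2, Fintype.sum_prod_type]

/-- `I(U₁;U₂) ≥ 0`. -/
lemma aux_IUU (hpY : IsPmf pY) (h1 : IsChan p1) (h2 : IsChan p2) :
    ent (bU12 (btJoint pY p1 p2)) ≤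
      ent (bU1 (btJoint pY p1 p2)) + ent (bU2 (btJoint pY p1 p2)) := by
  have := aux_subadd (fun u1 u2 => bU12 (btJoint pY p1 p2) (u1, u2)) (fun u1 u2 =>
    Finset.sum_nonneg fun y1 _ => Finset.sum_nonneg fun y2 _ => aux_J_nonneg hpY h1 h2 _)
  have hs := aux_sum_U12 hpY h1 h2
  rw [Fintype.sum_prod_type] at hs
  rw [hs, negMulLog_one, add_zero] at this
  simp only [ent, Fintype.sum_prod_type]
  exact this

lemma aux_I1c_le (hpY : IsPmf pY) (h1 : IsChan p1) (h2 : IsChan p2) :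
    bI1c (btJoint pY p1 p2) ≤ bI1m (btJoint pY p1 p2) := by
  rw [aux_I1c pY h1 h2, aux_I1m pY h1 h2]
  linarith [aux_IUU hpY h1 h2]

lemma aux_I2c_le (hpY : IsPmf pY) (h1 : IsChan p1) (h2 : IsChan p2) :
    bI2c (btJoint pY p1 p2) ≤ bI2m (btJoint pY p1 p2) := by
  rw [aux_I2c pY h1 h2, aux_I2m pY h1 h2]
  linarith [aux_IUU hpY h1 h2]

lemma aux_I_sum (h1 : IsChan p1) (h2 : IsChan p2) :
    bI1c (btJoint pY p1 p2) + bI2m (btJoint pY p1 p2)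
      = bI2c (btJoint pY p1 p2) + bI1m (btJoint pY p1 p2) := by
  rw [aux_I1c pY h1 h2, aux_I1m pY h1 h2, aux_I2c pY h1 h2, aux_I2m pY h1 h2]
  ring

lemma aux_I1c_nonneg (hpY : IsPmf pY) (h1 : IsChan p1) (h2 : IsChan p2) :
    0 ≤ bI1c (btJoint pY p1 p2) := by
  have := Finset.sum_le_sum fun u2 (_ : u2 ∈ (Finset.univ : Finset U2)) =>
    aux_subadd (fun y1 u1 => bY1U (btJoint pY p1 p2) (y1, u1, u2)) (fun y1 u1 =>
      Finset.sum_nonneg fun y2 _ => aux_J_nonneg hpY h1 h2 _)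
  simp only [Finset.sum_add_distrib] at this
  have e1 : ent (bY1U (btJoint pY p1 p2)) =
      ∑ u2, ∑ y1, ∑ u1, negMulLog (bY1U (btJoint pY p1 p2) (y1, u1, u2)) := by
    simp only [ent, Fintype.sum_prod_type]
    symm
    rw [Finset.sum_comm]
    exact Finset.sum_congr rfl fun y1 _ => Finset.sum_comm
  have e2 : ent (bU2 (btJoint pY p1 p2)) =
      ∑ u2, negMulLog (∑ y1, ∑ u1, bY1U (btJoint pY p1 p2) (y1, u1, u2)) := by
    simp only [ent, bU2, bU12]
    refine Finset.sum_congr rfl fun u2 _ => ?_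
    rw [Finset.sum_comm]
  have e3 : ent (bY1U2 (btJoint pY p1 p2)) =
      ∑ u2, ∑ y1, negMulLog (∑ u1, bY1U (btJoint pY p1 p2) (y1, u1, u2)) := by
    simp only [ent, Fintype.sum_prod_type, bY1U2]
    rw [Finset.sum_comm]
  have e4 : ent (bU12 (btJoint pY p1 p2)) =
      ∑ u2, ∑ u1, negMulLog (∑ y1, bY1U (btJoint pY p1 p2) (y1, u1, u2)) := by
    simp only [ent, Fintype.sum_prod_type, bU12]
    rw [Finset.sum_comm]
  rw [bI1c, e1, e2, e3, e4]
  linarith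

lemma aux_U12' (u1 : U1) (u2 : U2) :
    bU12 (btJoint pY p1 p2) (u1, u2) = ∑ y2, bY2U (btJoint pY p1 p2) (y2, u1, u2) := by
  simp only [bU12, bY1U, bY2U]
  rw [Finset.sum_comm]

lemma aux_I2c_nonneg (hpY : IsPmf pY) (h1 : IsChan p1) (h2 : IsChan p2) :
    0 ≤ bI2c (btJoint pY p1 p2) := by
  have := Finset.sum_le_sum fun u1 (_ : u1 ∈ (Finset.univ : Finset U1)) =>
    aux_subadd (fun y2 u2 => bY2U (btJoint pY p1 p2) (y2, u1, u2)) (fun y2 u2 =>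
      Finset.sum_nonneg fun y1 _ => aux_J_nonneg hpY h1 h2 _)
  simp only [Finset.sum_add_distrib] at this
  have e1 : ent (bY2U (btJoint pY p1 p2)) =
      ∑ u1, ∑ y2, ∑ u2, negMulLog (bY2U (btJoint pY p1 p2) (y2, u1, u2)) := by
    simp only [ent, Fintype.sum_prod_type]
    rw [Finset.sum_comm]
  have e2 : ent (bU1 (btJoint pY p1 p2)) =
      ∑ u1, negMulLog (∑ y2, ∑ u2, bY2U (btJoint pY p1 p2) (y2, u1, u2)) := by
    simp only [ent, bU1, aux_U12']
    refine Finset.sum_congr rfl fun u2 _ => ?_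
    rw [Finset.sum_comm]
  have e3 : ent (bY2U1 (btJoint pY p1 p2)) =
      ∑ u1, ∑ y2, negMulLog (∑ u2, bY2U (btJoint pY p1 p2) (y2, u1, u2)) := by
    simp only [ent, Fintype.sum_prod_type, bY2U1]
    rw [Finset.sum_comm]
  have e4 : ent (bU12 (btJoint pY p1 p2)) =
      ∑ u1, ∑ u2, negMulLog (∑ y2, bY2U (btJoint pY p1 p2) (y2, u1, u2)) := by
    simp only [ent, Fintype.sum_prod_type, aux_U12']
  rw [bI2c, e1, e2, e3, e4]
  linarith

/-- Channels that ignore their input have zero mutual information. -/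
lemma aux_const (hpY : IsPmf pY) (q1 : U1 → ℝ) (q2 : U2 → ℝ) (h1 : IsPmf q1) (h2 : IsPmf q2) :
    bI1m (btJoint pY (fun _ => q1) (fun _ => q2)) = 0 ∧
    bI2m (btJoint pY (fun _ => q1) (fun _ => q2)) = 0 := by
  have c1 : IsChan (fun _ : Y1 => q1) := fun _ => h1
  have c2 : IsChan (fun _ : Y2 => q2) := fun _ => h2
  constructor
  · have e : bU1 (btJoint pY (fun _ => q1) (fun _ => q2)) = q1 := by
      funext u1
      have : bU1 (btJoint pY (fun _ => q1) (fun _ => q2)) u1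
          = ∑ y1, bY1U1 (btJoint pY (fun _ => q1) (fun _ => q2)) (y1, u1) := by
        simp only [bU1, bU12, bY1U1]
        rw [Finset.sum_comm]
      rw [this]
      simp only [aux_mY1U1 pY c2, ← Finset.sum_mul, aux_sum_bY1 hpY, one_mul]
    rw [aux_I1m pY c1 c2, e, auxE1, ← Finset.sum_mul, aux_sum_bY1 hpY]
    ring
  · have e : bU2 (btJoint pY (fun _ => q1) (fun _ => q2)) = q2 := by
      funext u2
      have : bU2 (btJoint pY (fun _ => q1) (fun _ => q2)) u2
          = ∑ y2, bY2U2 (btJoint pY (fun _ => q1) (fun _ => q2)) (y2, u2) := by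
        simp only [bU2, aux_U12', bY2U2]
        rw [Finset.sum_comm]
      rw [this]
      simp only [aux_mY2U2 pY c1, ← Finset.sum_mul, aux_sum_bY2 hpY, one_mul]
    rw [aux_I2m pY c1 c2, e, auxE2, ← Finset.sum_mul, aux_sum_bY2 hpY]
    ring

end marginals

/-! ### Time sharing -/

section timesharing

variable {pY : Y1 × Y2 → ℝ} {pQ : Qt → ℝ} {c1 : Qt → Y1 → U1 → ℝ} {c2 : Qt → Y2 → U2 → ℝ}

lemma aux_qU12 (hpY : IsPmf pY) (h1 : ∀ q, IsChan (c1 q)) (h2 : ∀ q, IsChan (c2 q)) :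
    ent (bqU12 (btJointQ pQ pY c1 c2)) =
      ∑ q, pQ q * ent (bU12 (btJoint pY (c1 q) (c2 q))) + ent pQ := by
  rw [← aux_entQ pQ _ fun q => aux_sum_U12 hpY (h1 q) (h2 q)]
  have e : ∀ u1 u2 q, bqU12 (btJointQ pQ pY c1 c2) (u1, u2, q)
      = pQ q * bU12 (btJoint pY (c1 q) (c2 q)) (u1, u2) := by
    intro u1 u2 q
    simp only [bqU12, btJointQ, bU12, bY1U, btJoint, Finset.mul_sum, mul_assoc]
  simp only [ent, Fintype.sum_prod_type, e]
  symm
  rw [Finset.sum_comm]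
  exact Finset.sum_congr rfl fun _ _ => Finset.sum_comm

lemma aux_qU2 (hpY : IsPmf pY) (h1 : ∀ q, IsChan (c1 q)) (h2 : ∀ q, IsChan (c2 q)) :
    ent (bqU2 (btJointQ pQ pY c1 c2)) =
      ∑ q, pQ q * ent (bU2 (btJoint pY (c1 q) (c2 q))) + ent pQ := by
  rw [← aux_entQ pQ _ fun q => aux_sum_U2 hpY (h1 q) (h2 q)]
  have e : ∀ u2 q, bqU2 (btJointQ pQ pY c1 c2) (u2, q)
      = pQ q * bU2 (btJoint pY (c1 q) (c2 q)) u2 := by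
    intro u2 q
    simp only [bqU2, bU2, bqU12, btJointQ, bU12, bY1U, btJoint, Finset.mul_sum, mul_assoc]
  simp only [ent, Fintype.sum_prod_type, e]
  exact Finset.sum_comm

lemma aux_qU1 (hpY : IsPmf pY) (h1 : ∀ q, IsChan (c1 q)) (h2 : ∀ q, IsChan (c2 q)) :
    ent (bqU1 (btJointQ pQ pY c1 c2)) =
      ∑ q, pQ q * ent (bU1 (btJoint pY (c1 q) (c2 q))) + ent pQ := by
  rw [← aux_entQ pQ _ fun q => aux_sum_U1 hpY (h1 q) (h2 q)]
  have e : ∀ u1 q, bqU1 (btJointQ pQ pY c1 c2) (u1, q)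
      = pQ q * bU1 (btJoint pY (c1 q) (c2 q)) u1 := by
    intro u1 q
    simp only [bqU1, bU1, bqU12, btJointQ, bU12, bY1U, btJoint, Finset.mul_sum, mul_assoc]
  simp only [ent, Fintype.sum_prod_type, e]
  exact Finset.sum_comm

lemma aux_qY1U2 (hpY : IsPmf pY) (h1 : ∀ q, IsChan (c1 q)) (h2 : ∀ q, IsChan (c2 q)) :
    ent (bqY1U2 (btJointQ pQ pY c1 c2)) =
      ∑ q, pQ q * ent (bY1U2 (btJoint pY (c1 q) (c2 q))) + ent pQ := by
  rw [← aux_entQ pQ _ fun q => aux_sum_Y1U2 hpY (h1 q) (h2 q)]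
  have e : ∀ y1 u2 q, bqY1U2 (btJointQ pQ pY c1 c2) (y1, u2, q)
      = pQ q * bY1U2 (btJoint pY (c1 q) (c2 q)) (y1, u2) := by
    intro y1 u2 q
    simp only [bqY1U2, btJointQ, bY1U2, bY1U, btJoint, Finset.mul_sum, mul_assoc]
    exact Finset.sum_comm
  simp only [ent, Fintype.sum_prod_type, e]
  symm
  rw [Finset.sum_comm]
  exact Finset.sum_congr rfl fun _ _ => Finset.sum_comm

lemma aux_qY2U1 (hpY : IsPmf pY) (h1 : ∀ q, IsChan (c1 q)) (h2 : ∀ q, IsChan (c2 q)) :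
    ent (bqY2U1 (btJointQ pQ pY c1 c2)) =
      ∑ q, pQ q * ent (bY2U1 (btJoint pY (c1 q) (c2 q))) + ent pQ := by
  rw [← aux_entQ pQ _ fun q => aux_sum_Y2U1 hpY (h1 q) (h2 q)]
  have e : ∀ y2 u1 q, bqY2U1 (btJointQ pQ pY c1 c2) (y2, u1, q)
      = pQ q * bY2U1 (btJoint pY (c1 q) (c2 q)) (y2, u1) := by
    intro y2 u1 q
    simp only [bqY2U1, btJointQ, bY2U1, bY2U, btJoint, Finset.mul_sum, mul_assoc]
    exact Finset.sum_comm
  simp only [ent, Fintype.sum_prod_type, e]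
  symm
  rw [Finset.sum_comm]
  exact Finset.sum_congr rfl fun _ _ => Finset.sum_comm

lemma aux_qY1U12 (hpY : IsPmf pY) (h1 : ∀ q, IsChan (c1 q)) (h2 : ∀ q, IsChan (c2 q)) :
    ent (bqY1U12 (btJointQ pQ pY c1 c2)) =
      ∑ q, pQ q * ent (bY1U (btJoint pY (c1 q) (c2 q))) + ent pQ := by
  rw [← aux_entQ pQ _ fun q => aux_sum_Y1U hpY (h1 q) (h2 q)]
  have e : ∀ y1 u1 u2 q, bqY1U12 (btJointQ pQ pY c1 c2) (y1, u1, u2, q)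
      = pQ q * bY1U (btJoint pY (c1 q) (c2 q)) (y1, u1, u2) := by
    intro y1 u1 u2 q
    simp only [bqY1U12, btJointQ, bY1U, btJoint, Finset.mul_sum, mul_assoc]
  simp only [ent, Fintype.sum_prod_type, e]
  symm
  rw [Finset.sum_comm]
  refine Finset.sum_congr rfl fun _ _ => ?_
  rw [Finset.sum_comm]
  exact Finset.sum_congr rfl fun _ _ => Finset.sum_comm

lemma aux_qY2U12 (hpY : IsPmf pY) (h1 : ∀ q, IsChan (c1 q)) (h2 : ∀ q, IsChan (c2 q)) :
    ent (bqY2U12 (btJointQ pQ pY c1 c2)) =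
      ∑ q, pQ q * ent (bY2U (btJoint pY (c1 q) (c2 q))) + ent pQ := by
  rw [← aux_entQ pQ _ fun q => aux_sum_Y2U hpY (h1 q) (h2 q)]
  have e : ∀ y2 u1 u2 q, bqY2U12 (btJointQ pQ pY c1 c2) (y2, u1, u2, q)
      = pQ q * bY2U (btJoint pY (c1 q) (c2 q)) (y2, u1, u2) := by
    intro y1 u1 u2 q
    simp only [bqY2U12, btJointQ, bY2U, btJoint, Finset.mul_sum, mul_assoc]
  simp only [ent, Fintype.sum_prod_type, e]
  symm
  rw [Finset.sum_comm]
  refine Finset.sum_congr rfl fun _ _ => ?_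
  rw [Finset.sum_comm]
  exact Finset.sum_congr rfl fun _ _ => Finset.sum_comm

lemma aux_qJ (hpY : IsPmf pY) (h1 : ∀ q, IsChan (c1 q)) (h2 : ∀ q, IsChan (c2 q)) :
    ent (btJointQ pQ pY c1 c2) =
      ∑ q, pQ q * ent (btJoint pY (c1 q) (c2 q)) + ent pQ := by
  rw [← aux_entQ pQ _ fun q => aux_sum_J hpY (h1 q) (h2 q), ent, Fintype.sum_prod_type]
  simp only [btJointQ, btJoint, mul_assoc]

set_option linter.unusedSectionVars false in
lemma aux_qY12e (h1 : ∀ q, IsChan (c1 q)) (h2 : ∀ q, IsChan (c2 q)) (y1 : Y1) (y2 : Y2) (q : Qt) :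
    bqY12 (btJointQ pQ pY c1 c2) (y1, y2, q) = pQ q * pY (y1, y2) := by
  simp only [bqY12, btJointQ, ← Finset.mul_sum, (h1 _ _).2, (h2 _ _).2, mul_one]

lemma aux_qY12 (hpY : IsPmf pY) (h1 : ∀ q, IsChan (c1 q)) (h2 : ∀ q, IsChan (c2 q)) :
    ent (bqY12 (btJointQ pQ pY c1 c2)) = ∑ q, pQ q * ent pY + ent pQ := by
  rw [← aux_entQ pQ (fun _ => pY) fun q => hpY.2]
  simp only [ent, Fintype.sum_prod_type, aux_qY12e h1 h2]
  symm
  rw [Finset.sum_comm]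
  exact Finset.sum_congr rfl fun _ _ => Finset.sum_comm

lemma aux_qQ (hpY : IsPmf pY) (h1 : ∀ q, IsChan (c1 q)) (h2 : ∀ q, IsChan (c2 q)) :
    bqQ (btJointQ pQ pY c1 c2) = pQ := by
  funext q
  have := hpY.2
  rw [Fintype.sum_prod_type] at this
  simp only [bqQ, aux_qY12e h1 h2, ← Finset.mul_sum, this, mul_one]

lemma aux_IQ1 (hpY : IsPmf pY) (h1 : ∀ q, IsChan (c1 q)) (h2 : ∀ q, IsChan (c2 q)) :
    bIQ1 (btJointQ pQ pY c1 c2) = ∑ q, pQ q * bI1c (btJoint pY (c1 q) (c2 q)) := by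
  simp only [bIQ1, bI1c, aux_qY1U2 hpY h1 h2, aux_qU12 hpY h1 h2, aux_qU2 hpY h1 h2,
    aux_qY1U12 hpY h1 h2, mul_add, mul_sub, Finset.sum_add_distrib, Finset.sum_sub_distrib]
  ring

lemma aux_IQ2 (hpY : IsPmf pY) (h1 : ∀ q, IsChan (c1 q)) (h2 : ∀ q, IsChan (c2 q)) :
    bIQ2 (btJointQ pQ pY c1 c2) = ∑ q, pQ q * bI2c (btJoint pY (c1 q) (c2 q)) := by
  simp only [bIQ2, bI2c, aux_qY2U1 hpY h1 h2, aux_qU12 hpY h1 h2, aux_qU1 hpY h1 h2,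
    aux_qY2U12 hpY h1 h2, mul_add, mul_sub, Finset.sum_add_distrib, Finset.sum_sub_distrib]
  ring

lemma aux_HQ1 (hpY : IsPmf pY) (h1 : ∀ q, IsChan (c1 q)) (h2 : ∀ q, IsChan (c2 q)) :
    bHQ1 (btJointQ pQ pY c1 c2) = ∑ q, pQ q * bH1 (btJoint pY (c1 q) (c2 q)) := by
  simp only [bHQ1, bH1, aux_qU12 hpY h1 h2,
    aux_qY1U12 hpY h1 h2, mul_sub, Finset.sum_sub_distrib]
  ring

lemma aux_HQ2 (hpY : IsPmf pY) (h1 : ∀ q, IsChan (c1 q)) (h2 : ∀ q, IsChan (c2 q)) :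
    bHQ2 (btJointQ pQ pY c1 c2) = ∑ q, pQ q * bH2 (btJoint pY (c1 q) (c2 q)) := by
  simp only [bHQ2, bH2, aux_qU12 hpY h1 h2,
    aux_qY2U12 hpY h1 h2, mul_sub, Finset.sum_sub_distrib]
  ring

lemma aux_IQsum (hpY : IsPmf pY) (h1 : ∀ q, IsChan (c1 q)) (h2 : ∀ q, IsChan (c2 q)) :
    bIQsum (btJointQ pQ pY c1 c2) = ∑ q, pQ q *
      (bI1c (btJoint pY (c1 q) (c2 q)) + bI2m (btJoint pY (c1 q) (c2 q))) := by
  have e : ∀ q, bI1c (btJoint pY (c1 q) (c2 q)) + bI2m (btJoint pY (c1 q) (c2 q))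
      = ent pY + ent (bU12 (btJoint pY (c1 q) (c2 q))) - ent (btJoint pY (c1 q) (c2 q)) := by
    intro q
    rw [aux_I1c pY (h1 q) (h2 q), aux_I2m pY (h1 q) (h2 q), aux_entJ pY (h1 q) (h2 q)]
    ring
  simp only [e, bIQsum, aux_qU12 hpY h1 h2, aux_qY12 hpY h1 h2, aux_qQ hpY h1 h2,
    aux_qJ hpY h1 h2, mul_add, mul_sub, Finset.sum_add_distrib, Finset.sum_sub_distrib]
  ring

end timesharing

/-! ### Compactness of the set of test channels -/

lemma aux_chan_compact {α β : Type} [Fintype α] [Fintype β] :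
    IsCompact {w : α → β → ℝ | IsChan w} := by
  have : {w : α → β → ℝ | IsChan w} = Set.univ.pi fun _ : α => stdSimplex ℝ β := by
    ext w
    simp [IsChan, IsPmf, stdSimplex, Set.mem_pi]
  rw [this]
  exact isCompact_univ_pi fun _ => isCompact_stdSimplex ℝ β

section cont

variable (pY : Y1 × Y2 → ℝ)

lemma aux_cont_all :
    Continuous (fun x : (Y1 → U1 → ℝ) × (Y2 → U2 → ℝ) => bH1 (btJoint pY x.1 x.2)) ∧
    Continuous (fun x : (Y1 → U1 → ℝ) × (Y2 → U2 → ℝ) => bH2 (btJoint pY x.1 x.2)) ∧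
    Continuous (fun x : (Y1 → U1 → ℝ) × (Y2 → U2 → ℝ) => bI1c (btJoint pY x.1 x.2)) ∧
    Continuous (fun x : (Y1 → U1 → ℝ) × (Y2 → U2 → ℝ) => bI2c (btJoint pY x.1 x.2)) ∧
    Continuous (fun x : (Y1 → U1 → ℝ) × (Y2 → U2 → ℝ) => bI1m (btJoint pY x.1 x.2)) ∧
    Continuous (fun x : (Y1 → U1 → ℝ) × (Y2 → U2 → ℝ) => bI2m (btJoint pY x.1 x.2)) := by
  refine ⟨?_, ?_, ?_, ?_, ?_, ?_⟩ <;>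
  · simp only [bH1, bH2, bI1c, bI2c, bI1m, bI2m, ent, bY1U, bY2U, bU12, bU1, bU2, bY1U2, bY2U2,
      bY2U1, bY1U1, bY1, bY2, btJoint]
    fun_prop

end cont

/-! ### The elementary regions and the two inclusions -/

section regions

variable (pY : Y1 × Y2 → ℝ)

/-- Rate-distortion quadruples dominated by one corner point (order 1). -/
def auxS1 : Set (ℝ × ℝ × ℝ × ℝ) := {r | ∃ p1 : Y1 → Y1 → ℝ, ∃ p2 : Y2 → Y2 → ℝ,
  IsChan p1 ∧ IsChan p2 ∧ bI1c (btJoint pY p1 p2) ≤ r.1 ∧ bI2m (btJoint pY p1 p2) ≤ r.2.1 ∧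
  bH1 (btJoint pY p1 p2) ≤ r.2.2.1 ∧ bH2 (btJoint pY p1 p2) ≤ r.2.2.2}

/-- Rate-distortion quadruples dominated by one corner point (order 2). -/
def auxS2 : Set (ℝ × ℝ × ℝ × ℝ) := {r | ∃ p1 : Y1 → Y1 → ℝ, ∃ p2 : Y2 → Y2 → ℝ,
  IsChan p1 ∧ IsChan p2 ∧ bI2c (btJoint pY p1 p2) ≤ r.2.1 ∧ bI1m (btJoint pY p1 p2) ≤ r.1 ∧
  bH1 (btJoint pY p1 p2) ≤ r.2.2.1 ∧ bH2 (btJoint pY p1 p2) ≤ r.2.2.2}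

/-- The region `RD¹_BT`. -/
def auxT1 : Set (ℝ × ℝ × ℝ × ℝ) := {r | 0 ≤ r.1 ∧ 0 ≤ r.2.1 ∧
          ∀ a : ℝ, 0 ≤ a → a ≤ 1 →
            Dbt1 Y1 Y2 pY a r.1 r.2.1 ≤ a * r.2.2.1 + (1 - a) * r.2.2.2}

/-- The region `RD²_BT`. -/
def auxT2 : Set (ℝ × ℝ × ℝ × ℝ) := {r | 0 ≤ r.1 ∧ 0 ≤ r.2.1 ∧
          ∀ a : ℝ, 0 ≤ a → a ≤ 1 →
            Dbt2 Y1 Y2 pY a r.1 r.2.1 ≤ a * r.2.2.1 + (1 - a) * r.2.2.2}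

variable {pY}

/-- The distortion objective is bounded below over all test channels. -/
lemma aux_bdd (a : ℝ) : ∃ B : ℝ, ∀ p1 : Y1 → Y1 → ℝ, ∀ p2 : Y2 → Y2 → ℝ, IsChan p1 → IsChan p2 →
    B ≤ a * bH1 (btJoint pY p1 p2) + (1 - a) * bH2 (btJoint pY p1 p2) := by
  obtain ⟨c1, c2, -⟩ := aux_cont_all (U1 := Y1) (U2 := Y2) pY
  have hc := (aux_chan_compact (α := Y1) (β := Y1)).prod (aux_chan_compact (α := Y2) (β := Y2))
  obtain ⟨B, hB⟩ := hc.bddBelow_image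
    ((c1.const_mul a).add (c2.const_mul (1 - a))).continuousOn
  exact ⟨B, fun p1 p2 h1 h2 => hB ⟨(p1, p2), ⟨h1, h2⟩, rfl⟩⟩

lemma aux_S1_T1 (hpY : IsPmf pY) : auxS1 pY ⊆ auxT1 pY := by
  rintro ⟨r1, r2, d1, d2⟩ ⟨p1, p2, h1, h2, hr1, hr2, hd1, hd2⟩
  refine ⟨(aux_I1c_nonneg hpY h1 h2).trans hr1,
    ((aux_I2c_nonneg hpY h1 h2).trans (aux_I2c_le hpY h1 h2)).trans hr2, fun a ha ha1 => ?_⟩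
  obtain ⟨B, hB⟩ := aux_bdd (pY := pY) a
  unfold Dbt1
  refine le_trans (csInf_le ⟨B, ?_⟩ ⟨p1, p2, h1, h2, hr1, hr2, rfl⟩) ?_
  · rintro _ ⟨q1, q2, k1, k2, -, -, rfl⟩
    exact hB q1 q2 k1 k2
  · exact add_le_add (mul_le_mul_of_nonneg_left hd1 ha)
      (mul_le_mul_of_nonneg_left hd2 (by linarith))

lemma aux_S2_T2 (hpY : IsPmf pY) : auxS2 pY ⊆ auxT2 pY := by
  rintro ⟨r1, r2, d1, d2⟩ ⟨p1, p2, h1, h2, hr1, hr2, hd1, hd2⟩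
  refine ⟨((aux_I1c_nonneg hpY h1 h2).trans (aux_I1c_le hpY h1 h2)).trans hr2,
    (aux_I2c_nonneg hpY h1 h2).trans hr1, fun a ha ha1 => ?_⟩
  obtain ⟨B, hB⟩ := aux_bdd (pY := pY) a
  unfold Dbt2
  refine le_trans (csInf_le ⟨B, ?_⟩ ⟨p1, p2, h1, h2, hr1, hr2, rfl⟩) ?_
  · rintro _ ⟨q1, q2, k1, k2, -, -, rfl⟩
    exact hB q1 q2 k1 k2
  · exact add_le_add (mul_le_mul_of_nonneg_left hd1 ha)
      (mul_le_mul_of_nonneg_left hd2 (by linarith))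

/-- There is a pair of test channels with zero rates. -/
lemma aux_exists_zero (hpY : IsPmf pY) : ∃ p1 : Y1 → Y1 → ℝ, ∃ p2 : Y2 → Y2 → ℝ,
    IsChan p1 ∧ IsChan p2 ∧ bI1m (btJoint pY p1 p2) = 0 ∧ bI2m (btJoint pY p1 p2) = 0 := by
  classical
  have hne : Nonempty (Y1 × Y2) := by
    by_contra h
    rw [not_nonempty_iff] at h
    have := hpY.2
    simp at this
  obtain ⟨y1, y2⟩ := hne
  have k1 : IsPmf (Pi.single y1 1 : Y1 → ℝ) :=
    ⟨fun y => by by_cases h : y = y1 <;> simp [h], by simp⟩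
  have k2 : IsPmf (Pi.single y2 1 : Y2 → ℝ) :=
    ⟨fun y => by by_cases h : y = y2 <;> simp [h], by simp⟩
  obtain ⟨e1, e2⟩ := aux_const hpY _ _ k1 k2
  exact ⟨_, _, fun _ => k1, fun _ => k2, e1, e2⟩

/-- Lifting a planar convex hull into a slice of `ℝ⁴`. -/
lemma aux_lift {K : Set (ℝ × ℝ)} {S : Set (ℝ × ℝ × ℝ × ℝ)} {R1 R2 d1 d2 : ℝ}
    (h : ∀ k ∈ K, (R1, R2, k.1, k.2) ∈ S) (hd : (d1, d2) ∈ convexHull ℝ K) :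
    (R1, R2, d1, d2) ∈ convexHull ℝ S := by
  have hc : Convex ℝ {k : ℝ × ℝ | (R1, R2, k.1, k.2) ∈ convexHull ℝ S} := by
    intro x hx y hy a b ha hb hab
    have := convex_convexHull ℝ S hx hy ha hb hab
    simp only [Set.mem_ofPred_eq]
    convert this using 1
    have e1 : R1 = a * R1 + b * R1 := by rw [← add_mul, hab, one_mul]
    have e2 : R2 = a * R2 + b * R2 := by rw [← add_mul, hab, one_mul]
    ext <;> simp [← e1, ← e2]
  have hsub : K ⊆ {k : ℝ × ℝ | (R1, R2, k.1, k.2) ∈ convexHull ℝ S} :=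
    fun k hk => subset_convexHull ℝ S (h k hk)
  exact convexHull_min hsub hc hd

lemma aux_T1_S1 (hpY : IsPmf pY) : auxT1 pY ⊆ convexHull ℝ (auxS1 pY) := by
  rintro ⟨r1, r2, d1, d2⟩ ⟨hr1, hr2, hD⟩
  simp only at hr1 hr2 hD
  obtain ⟨cH1, cH2, cI1c, cI2c, cI1m, cI2m⟩ := aux_cont_all (U1 := Y1) (U2 := Y2) pY
  have hc := ((aux_chan_compact (α := Y1) (β := Y1)).prod
    (aux_chan_compact (α := Y2) (β := Y2))).inter_right
      ((isClosed_le cI1c (continuous_const (y := r1))).inter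
        (isClosed_le cI2m (continuous_const (y := r2))))
  have hK := hc.image (cH1.prodMk cH2)
  obtain ⟨q1, q2, k1, k2, z1, z2⟩ := aux_exists_zero hpY
  have hq : bI1c (btJoint pY q1 q2) ≤ r1 ∧ bI2m (btJoint pY q1 q2) ≤ r2 :=
    ⟨((aux_I1c_le hpY k1 k2).trans z1.le).trans hr1, z2.le.trans hr2⟩
  refine aux_lift ?_ (aux_scalar hK ⟨_, (q1, q2), ⟨⟨k1, k2⟩, hq⟩, rfl⟩ d1 d2 ?_)
  · rintro _ ⟨_, ⟨⟨p1, p2⟩, ⟨⟨h1, h2⟩, hr1, hr2⟩, rfl⟩, ⟨x, y⟩, ⟨hx, hy⟩, rfl⟩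
    simp only [Prod.fst_zero, Prod.snd_zero] at hx hy
    refine ⟨p1, p2, h1, h2, hr1, hr2, ?_, ?_⟩
    · simpa using hx
    · simpa using hy
  · intro a ha ha1 u hu
    refine le_trans ?_ (hD a ha ha1)
    unfold Dbt1
    refine le_csInf ⟨_, q1, q2, k1, k2, hq.1, hq.2, rfl⟩ ?_
    rintro _ ⟨p1, p2, h1, h2, e1, e2, rfl⟩
    exact hu _ ⟨(p1, p2), ⟨⟨h1, h2⟩, e1, e2⟩, rfl⟩

lemma aux_T2_S2 (hpY : IsPmf pY) : auxT2 pY ⊆ convexHull ℝ (auxS2 pY) := by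
  rintro ⟨r1, r2, d1, d2⟩ ⟨hr1, hr2, hD⟩
  simp only at hr1 hr2 hD
  obtain ⟨cH1, cH2, cI1c, cI2c, cI1m, cI2m⟩ := aux_cont_all (U1 := Y1) (U2 := Y2) pY
  have hc := ((aux_chan_compact (α := Y1) (β := Y1)).prod
    (aux_chan_compact (α := Y2) (β := Y2))).inter_right
      ((isClosed_le cI2c (continuous_const (y := r2))).inter
        (isClosed_le cI1m (continuous_const (y := r1))))
  have hK := hc.image (cH1.prodMk cH2)
  obtain ⟨q1, q2, k1, k2, z1, z2⟩ := aux_exists_zero hpY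
  have hq : bI2c (btJoint pY q1 q2) ≤ r2 ∧ bI1m (btJoint pY q1 q2) ≤ r1 :=
    ⟨((aux_I2c_le hpY k1 k2).trans z2.le).trans hr2, z1.le.trans hr1⟩
  refine aux_lift ?_ (aux_scalar hK ⟨_, (q1, q2), ⟨⟨k1, k2⟩, hq⟩, rfl⟩ d1 d2 ?_)
  · rintro _ ⟨_, ⟨⟨p1, p2⟩, ⟨⟨h1, h2⟩, hr1, hr2⟩, rfl⟩, ⟨x, y⟩, ⟨hx, hy⟩, rfl⟩
    simp only [Prod.fst_zero, Prod.snd_zero] at hx hy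
    refine ⟨p1, p2, h1, h2, hr1, hr2, ?_, ?_⟩
    · simpa using hx
    · simpa using hy
  · intro a ha ha1 u hu
    refine le_trans ?_ (hD a ha ha1)
    unfold Dbt2
    refine le_csInf ⟨_, q1, q2, k1, k2, hq.1, hq.2, rfl⟩ ?_
    rintro _ ⟨p1, p2, h1, h2, e1, e2, rfl⟩
    exact hu _ ⟨(p1, p2), ⟨⟨h1, h2⟩, e1, e2⟩, rfl⟩

/-- A point dominating an average of points whose upper sets lie in `S` is in `conv S`. -/
lemma aux_avg {Q : Type} [Fintype Q] {S : Set (ℝ × ℝ × ℝ × ℝ)} {w : Q → ℝ} (hw : IsPmf w)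
    (A B C D : Q → ℝ)
    (hS : ∀ q, ∀ x1 x2 x3 x4 : ℝ, A q ≤ x1 → B q ≤ x2 → C q ≤ x3 → D q ≤ x4 →
      (x1, x2, x3, x4) ∈ S) (r1 r2 r3 r4 : ℝ)
    (h1 : ∑ q, w q * A q ≤ r1) (h2 : ∑ q, w q * B q ≤ r2) (h3 : ∑ q, w q * C q ≤ r3)
    (h4 : ∑ q, w q * D q ≤ r4) : (r1, r2, r3, r4) ∈ convexHull ℝ S := by
  have hmem : ∑ q, w q • ((A q + (r1 - ∑ q, w q * A q), B q + (r2 - ∑ q, w q * B q),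
      C q + (r3 - ∑ q, w q * C q), D q + (r4 - ∑ q, w q * D q)) : ℝ × ℝ × ℝ × ℝ)
      ∈ convexHull ℝ S :=
    (convex_convexHull ℝ S).sum_mem (fun q _ => hw.1 q) hw.2 fun q _ =>
      subset_convexHull ℝ S (hS q _ _ _ _ (by linarith) (by linarith) (by linarith) (by linarith))
  convert hmem using 1
  have e : ∀ (F : Q → ℝ) (r : ℝ), ∑ q, w q * (F q + (r - ∑ q, w q * F q)) = r := by
    intro F r
    simp only [mul_add, Finset.sum_add_distrib, ← Finset.sum_mul, hw.2]
    ring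
  ext <;> simp only [Prod.fst_sum, Prod.snd_sum, Prod.smul_fst, Prod.smul_snd, smul_eq_mul, e]

end regions

/-- **Proposition 4** (Berger–Tung region decomposition):
`RD_BT = conv(RD¹_BT ∪ RD²_BT)` as subsets of `ℝ⁴`. Here the auxiliary alphabets are
`𝒰₁ = 𝒴₁` and `𝒰₂ = 𝒴₂` (so that `|𝒰ᵢ| = |𝒴ᵢ|`), and the time-sharing alphabet is
`Fin m` with `m ≤ 5`. -/
theorem bt_region_decomposition
    (pY : Y1 × Y2 → ℝ) (hpY : IsPmf pY) :
    {r : ℝ × ℝ × ℝ × ℝ | ∃ m : ℕ, m ≤ 5 ∧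
      ∃ pQ : Fin m → ℝ, ∃ c1 : Fin m → Y1 → Y1 → ℝ, ∃ c2 : Fin m → Y2 → Y2 → ℝ,
        IsPmf pQ ∧ (∀ q, IsChan (c1 q)) ∧ (∀ q, IsChan (c2 q)) ∧
        bIQ1 (btJointQ pQ pY c1 c2) ≤ r.1 ∧
        bIQ2 (btJointQ pQ pY c1 c2) ≤ r.2.1 ∧
        bIQsum (btJointQ pQ pY c1 c2) ≤ r.1 + r.2.1 ∧
        bHQ1 (btJointQ pQ pY c1 c2) ≤ r.2.2.1 ∧
        bHQ2 (btJointQ pQ pY c1 c2) ≤ r.2.2.2}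
    = convexHull ℝ
      ({r : ℝ × ℝ × ℝ × ℝ | 0 ≤ r.1 ∧ 0 ≤ r.2.1 ∧
          ∀ a : ℝ, 0 ≤ a → a ≤ 1 →
            Dbt1 Y1 Y2 pY a r.1 r.2.1 ≤ a * r.2.2.1 + (1 - a) * r.2.2.2}
        ∪ {r : ℝ × ℝ × ℝ × ℝ | 0 ≤ r.1 ∧ 0 ≤ r.2.1 ∧
          ∀ a : ℝ, 0 ≤ a → a ≤ 1 →
            Dbt2 Y1 Y2 pY a r.1 r.2.1 ≤ a * r.2.2.1 + (1 - a) * r.2.2.2}) := by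
  change _ = convexHull ℝ (auxT1 pY ∪ auxT2 pY)
  apply Set.Subset.antisymm
  · rintro ⟨r1, r2, d1, d2⟩ ⟨m, -, w, c1, c2, hw, h1, h2, g1, g2, g3, g4, g5⟩
    rw [aux_IQ1 hpY h1 h2] at g1
    rw [aux_IQ2 hpY h1 h2] at g2
    rw [aux_IQsum hpY h1 h2] at g3
    rw [aux_HQ1 hpY h1 h2] at g4
    rw [aux_HQ2 hpY h1 h2] at g5
    simp only at g1 g2 g3 g4 g5
    set a := ∑ q, w q * bI1c (btJoint pY (c1 q) (c2 q)) with ha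
    set b := ∑ q, w q * bI2c (btJoint pY (c1 q) (c2 q)) with hb
    set c := ∑ q, w q * (bI1c (btJoint pY (c1 q) (c2 q)) + bI2m (btJoint pY (c1 q) (c2 q)))
      with hc
    have hca : ∑ q, w q * bI2m (btJoint pY (c1 q) (c2 q)) = c - a := by
      rw [ha, hc, ← Finset.sum_sub_distrib]
      exact Finset.sum_congr rfl fun q _ => by ring
    have hcb : ∑ q, w q * bI1m (btJoint pY (c1 q) (c2 q)) = c - b := by
      rw [hb, hc, ← Finset.sum_sub_distrib]
      refine Finset.sum_congr rfl fun q _ => ?_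
      rw [aux_I_sum (h1 q) (h2 q)]
      ring
    have M1 : ∀ x1 x2, a ≤ x1 → c - a ≤ x2 →
        (x1, x2, d1, d2) ∈ convexHull ℝ (auxT1 pY ∪ auxT2 pY) := by
      intro x1 x2 hx1 hx2
      refine convexHull_mono (Set.subset_union_left) (aux_avg hw _ _ _ _ ?_ x1 x2 d1 d2
        hx1 (hca.le.trans hx2) g4 g5)
      intro q x1 x2 x3 x4 e1 e2 e3 e4
      exact aux_S1_T1 hpY ⟨c1 q, c2 q, h1 q, h2 q, e1, e2, e3, e4⟩
    have M2 : ∀ x1 x2, c - b ≤ x1 → b ≤ x2 →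
        (x1, x2, d1, d2) ∈ convexHull ℝ (auxT1 pY ∪ auxT2 pY) := by
      intro x1 x2 hx1 hx2
      refine convexHull_mono (Set.subset_union_right) (aux_avg hw _ _ _ _ ?_ x1 x2 d1 d2
        (hcb.le.trans hx1) hx2 g4 g5)
      intro q x1 x2 x3 x4 e1 e2 e3 e4
      exact aux_S2_T2 hpY ⟨c1 q, c2 q, h1 q, h2 q, e2, e1, e3, e4⟩
    rcases le_or_gt (c - b) r1 with h | h
    · exact M2 r1 r2 h g2
    · have hpos : 0 < c - b - a := by linarith
      have X := M1 a (r1 + r2 - a) le_rfl (by linarith)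
      have Y := M2 (c - b) (r1 + r2 - (c - b)) le_rfl (by linarith)
      have := convex_convexHull ℝ (auxT1 pY ∪ auxT2 pY) X Y
        (a := (c - b - r1) / (c - b - a)) (b := (r1 - a) / (c - b - a))
        (div_nonneg (by linarith) hpos.le) (div_nonneg (by linarith) hpos.le)
        (by rw [← add_div]; rw [div_eq_one_iff_eq hpos.ne']; ring)
      convert this using 1
      ext <;> simp only [Prod.fst_add, Prod.snd_add, Prod.smul_mk, smul_eq_mul] <;> field_simp <;>
        ring
  · intro r hr
    have hr' : r ∈ convexHull ℝ (auxS1 pY ∪ auxS2 pY) := by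
      refine convexHull_min (Set.union_subset ?_ ?_) (convex_convexHull ℝ _) hr
      · exact (aux_T1_S1 hpY).trans (convexHull_mono Set.subset_union_left)
      · exact (aux_T2_S2 hpY).trans (convexHull_mono Set.subset_union_right)
    obtain ⟨ι, _, z, w, hz, hai, hw, hw1, hx⟩ := eq_pos_convex_span_of_mem_convexHull hr'
    have hcard : Fintype.card ι ≤ 5 := by
      have h1 := hai.card_le_finrank_succ
      have h2 : Module.finrank ℝ (vectorSpan ℝ (Set.range z))
          ≤ Module.finrank ℝ (ℝ × ℝ × ℝ × ℝ) := Submodule.finrank_le _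
      simp at h2
      omega
    have hP : ∀ i, ∃ p1 : Y1 → Y1 → ℝ, ∃ p2 : Y2 → Y2 → ℝ, IsChan p1 ∧ IsChan p2 ∧
        bI1c (btJoint pY p1 p2) ≤ (z i).1 ∧ bI2c (btJoint pY p1 p2) ≤ (z i).2.1 ∧
        bI1c (btJoint pY p1 p2) + bI2m (btJoint pY p1 p2) ≤ (z i).1 + (z i).2.1 ∧
        bH1 (btJoint pY p1 p2) ≤ (z i).2.2.1 ∧ bH2 (btJoint pY p1 p2) ≤ (z i).2.2.2 := by
      intro i
      rcases hz ⟨i, rfl⟩ with ⟨p1, p2, h1, h2, e1, e2, e3, e4⟩ | ⟨p1, p2, h1, h2, e1, e2, e3, e4⟩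
      · exact ⟨p1, p2, h1, h2, e1, (aux_I2c_le hpY h1 h2).trans e2, add_le_add e1 e2, e3, e4⟩
      · refine ⟨p1, p2, h1, h2, (aux_I1c_le hpY h1 h2).trans e2, e1, ?_, e3, e4⟩
        rw [aux_I_sum h1 h2]
        linarith
    choose P1 P2 h1 h2 e1 e2 e3 e4 e5 using hP
    let e := (Fintype.equivFin ι).symm
    have hle : ∀ (F G : ι → ℝ), (∀ i, F i ≤ G i) → ∑ q, w (e q) * F (e q) ≤ ∑ i, w i * G i := by
      intro F G hFG
      rw [e.sum_comp (fun i => w i * F i)]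
      exact Finset.sum_le_sum fun i _ => mul_le_mul_of_nonneg_left (hFG i) (hw i).le
    refine ⟨Fintype.card ι, hcard, fun q => w (e q), fun q => P1 (e q), fun q => P2 (e q),
      ⟨fun q => (hw _).le, by rw [e.sum_comp w, hw1]⟩, fun q => h1 _, fun q => h2 _, ?_⟩
    have k1 : ∀ q, IsChan (P1 (e q)) := fun q => h1 _
    have k2 : ∀ q, IsChan (P2 (e q)) := fun q => h2 _
    rw [aux_IQ1 hpY k1 k2, aux_IQ2 hpY k1 k2, aux_IQsum hpY k1 k2, aux_HQ1 hpY k1 k2,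
      aux_HQ2 hpY k1 k2, ← hx]
    simp only [Prod.fst_sum, Prod.snd_sum, Prod.smul_fst, Prod.smul_snd, smul_eq_mul,
      ← Finset.sum_add_distrib, ← mul_add]
    exact ⟨hle (fun i => bI1c (btJoint pY (P1 i) (P2 i))) _ e1,
      hle (fun i => bI2c (btJoint pY (P1 i) (P2 i))) _ e2,
      hle (fun i => bI1c (btJoint pY (P1 i) (P2 i)) + bI2m (btJoint pY (P1 i) (P2 i))) _ e3,
      hle (fun i => bH1 (btJoint pY (P1 i) (P2 i))) _ e4,
      hle (fun i => bH2 (btJoint pY (P1 i) (P2 i))) _ e5⟩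
end
end
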